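/- arXiv:1502.03365 — 2 statements merged into one kernel-verified Lean document; each statement's English description precedes it below -/
import Mathlib

section
/- Let ℙ_n denote the distribution of the observed labeled graph (G, L) under the labeled stochastic block model 𝒢(n, a/n, b/n, μ, ν), and let ℙ'_n denote the distribution of the labeled Erdős–Rényi graph 𝒢(n, (a+b)/2). If τ > 1, then ℙ_n and ℙ'_n are asymptotically orthogonal: there exists a sequence of events A_n (measurable sets of labeled graphs on n vertices) such that ℙ_n(A_n) → 1 and ℙ'_n(A_n) → 0 as n → ∞. -/
open Finset Filter Real

namespace LSBM

/-- Ordered pairs `u < v` of vertices. -/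
abbrev Pairs (n : ℕ) := {p : Fin n × Fin n // p.1 < p.2}

/-- A labeled-graph configuration: each pair `u < v` carries `none` (no edge)
or `some ℓ` (an edge with label `ℓ`). -/
abbrev EdgeConf (n : ℕ) (L : Type*) := Pairs n → Option L

variable {L : Type*}

/-- The label (if any) on the edge between `u` and `v`. -/
def getLabel {n : ℕ} (E : EdgeConf n L) (u v : Fin n) : Option L :=
  if h : u < v then E ⟨(u, v), h⟩ else if h' : v < u then E ⟨(v, u), h'⟩ else none

/-- Per-pair mass under the labeled stochastic block model. -/
noncomputable def sbmPairMass (n : ℕ) (a b : ℝ) (μ ν : L → ℝ) (same : Bool) : Option L → ℝ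
  | none => if same then 1 - a / n else 1 - b / n
  | some ℓ => if same then (a / n) * μ ℓ else (b / n) * ν ℓ

/-- Joint mass of a (type assignment, labeled graph) outcome under the labeled SBM. -/
noncomputable def sbmMass (n : ℕ) (a b : ℝ) (μ ν : L → ℝ)
    (x : (Fin n → Bool) × EdgeConf n L) : ℝ :=
  (1 / 2 : ℝ) ^ n *
    ∏ p : Pairs n, sbmPairMass n a b μ ν (x.1 p.1.1 == x.1 p.1.2) (x.2 p)

/-- Probability of an event under the labeled SBM (joint in types and graph). -/
noncomputable def sbmProb [Fintype L] (n : ℕ) (a b : ℝ) (μ ν : L → ℝ)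
    (A : Set ((Fin n → Bool) × EdgeConf n L)) : ℝ :=
  ∑ x : (Fin n → Bool) × EdgeConf n L, A.indicator (sbmMass n a b μ ν) x

/-- Probability of a labeled-graph event under the labeled SBM (marginal over types). -/
noncomputable def sbmGraphProb [Fintype L] (n : ℕ) (a b : ℝ) (μ ν : L → ℝ)
    (A : Set (EdgeConf n L)) : ℝ :=
  sbmProb n a b μ ν {x | x.2 ∈ A}

/-- Conditional (given the type assignment `σ`) probability of a labeled-graph event
under the labeled SBM. -/
noncomputable def sbmCondProb [Fintype L] (n : ℕ) (a b : ℝ) (μ ν : L → ℝ)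
    (σ : Fin n → Bool) (A : Set (EdgeConf n L)) : ℝ :=
  ∑ E : EdgeConf n L, A.indicator
    (fun E' => ∏ p : Pairs n, sbmPairMass n a b μ ν (σ p.1.1 == σ p.1.2) (E' p)) E

/-- Conditional (given `σ`) expectation of a function of the labeled graph. -/
noncomputable def sbmCondExp [Fintype L] (n : ℕ) (a b : ℝ) (μ ν : L → ℝ)
    (σ : Fin n → Bool) (f : EdgeConf n L → ℝ) : ℝ :=
  ∑ E : EdgeConf n L,
    (∏ p : Pairs n, sbmPairMass n a b μ ν (σ p.1.1 == σ p.1.2) (E p)) * f E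

/-- Per-pair mass under the labeled Erdős–Rényi model. -/
noncomputable def erPairMass (n : ℕ) (a b : ℝ) (μ ν : L → ℝ) : Option L → ℝ
  | none => 1 - (a + b) / (2 * n)
  | some ℓ => ((a + b) / (2 * n)) * ((a * μ ℓ + b * ν ℓ) / (a + b))

/-- Mass of a labeled graph under the labeled Erdős–Rényi model. -/
noncomputable def erMass [Fintype L] (n : ℕ) (a b : ℝ) (μ ν : L → ℝ) (E : EdgeConf n L) : ℝ :=
  ∏ p : Pairs n, erPairMass n a b μ ν (E p)

/-- Probability of a labeled-graph event under the labeled Erdős–Rényi model. -/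
noncomputable def erProb [Fintype L] (n : ℕ) (a b : ℝ) (μ ν : L → ℝ)
    (A : Set (EdgeConf n L)) : ℝ :=
  ∑ E : EdgeConf n L, A.indicator (erMass n a b μ ν) E

/-- Expectation of a function of the labeled graph under the labeled Erdős–Rényi model. -/
noncomputable def erExp [Fintype L] (n : ℕ) (a b : ℝ) (μ ν : L → ℝ)
    (f : EdgeConf n L → ℝ) : ℝ :=
  ∑ E : EdgeConf n L, erMass n a b μ ν E * f E

/-- `μ` is a probability distribution on the (finite) label set. -/
def IsProbVec [Fintype L] (μ : L → ℝ) : Prop := (∀ ℓ, 0 ≤ μ ℓ) ∧ ∑ ℓ, μ ℓ = 1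

/-- The reconstruction-threshold parameter `τ`. -/
noncomputable def tau [Fintype L] (a b : ℝ) (μ ν : L → ℝ) : ℝ :=
  ∑ ℓ, (a * μ ℓ - b * ν ℓ) ^ 2 / (2 * (a * μ ℓ + b * ν ℓ))

/-- The weighted adjacency matrix `W` with `W u v = A u v * w (L u v)`. -/
def Wmat {n : ℕ} (w : L → ℝ) (E : EdgeConf n L) : Matrix (Fin n) (Fin n) ℝ :=
  fun u v => match getLabel E u v with
    | none => 0
    | some ℓ => w ℓ

/-- The ±1 vector associated with a Boolean type assignment (`true ↦ +1`). -/
def signVec {n : ℕ} (σ : Fin n → Bool) : Fin n → ℝ := fun u => if σ u then 1 else -1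

/-- `x` is a vector with entries in `{±1}`. -/
def IsSignVec {n : ℕ} (x : Fin n → ℝ) : Prop := ∀ u, x u = 1 ∨ x u = -1

/-- Componentwise sign of a real vector. -/
noncomputable def signR {n : ℕ} (x : Fin n → ℝ) : Fin n → ℝ :=
  fun u => if 0 ≤ x u then 1 else -1

open Classical in
/-- Hamming distance between two vectors. -/
noncomputable def hamming {n : ℕ} (x y : Fin n → ℝ) : ℕ :=
  (univ.filter fun u => x u ≠ y u).card

/-- The overlap `Q(x, y) = 1/2 - (1/n) min(d(x,y), d(x,-y))`. -/
noncomputable def overlap (n : ℕ) (x y : Fin n → ℝ) : ℝ :=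
  1 / 2 - (1 / n) * min (hamming x y : ℝ) (hamming x (-y) : ℝ)

open Classical in
/-- The weight of the cut induced by a ±1 assignment `σ`:
`∑_{(u,v) : u < v, σ_u ≠ σ_v} W_{uv}`. -/
noncomputable def cutWeight {n : ℕ} (w : L → ℝ) (E : EdgeConf n L) (σ : Fin n → ℝ) : ℝ :=
  ∑ p : Pairs n, if σ p.1.1 ≠ σ p.1.2 then Wmat w E p.1.1 p.1.2 else 0

/-- The quadratic form `xᵀ M x`. -/
def quadForm {n : ℕ} (M : Matrix (Fin n) (Fin n) ℝ) (x : Fin n → ℝ) : ℝ :=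
  ∑ u, ∑ v, x u * M u v * x v

/-- The entrywise inner product `⟨A, B⟩ = ∑_{u,v} A u v * B u v`. -/
def mInner {n : ℕ} (A B : Matrix (Fin n) (Fin n) ℝ) : ℝ :=
  ∑ u, ∑ v, A u v * B u v

/-- The degree of a vertex. -/
def degree {n : ℕ} (E : EdgeConf n L) (u : Fin n) : ℕ :=
  (univ.filter fun v => (getLabel E u v).isSome).card

open Classical in
/-- The weighted adjacency matrix of the graph obtained by removing all edges incident
to vertices of degree larger than `(3/2)·(a+b)/2`. -/
noncomputable def prunedW {n : ℕ} (a b : ℝ) (w : L → ℝ) (E : EdgeConf n L) :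
    Matrix (Fin n) (Fin n) ℝ :=
  fun u v =>
    if (degree E u : ℝ) ≤ (3 / 2) * ((a + b) / 2) ∧
       (degree E v : ℝ) ≤ (3 / 2) * ((a + b) / 2)
    then Wmat w E u v else 0

/-- The conditional (given `σ`) entrywise expectation `E[W | σ]` of the weighted
adjacency matrix. -/
noncomputable def condEW {n : ℕ} [Fintype L] (a b : ℝ) (μ ν w : L → ℝ)
    (σ : Fin n → Bool) : Matrix (Fin n) (Fin n) ℝ :=
  fun u v =>
    if u = v then 0
    else if σ u = σ v then (a / n) * ∑ ℓ, μ ℓ * w ℓ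
    else (b / n) * ∑ ℓ, ν ℓ * w ℓ

/-- The matrix `D' = W' - (α/n) J` used in the spectral method, where
`α = (1/2)·∑_ℓ w(ℓ)(aμ(ℓ)+bν(ℓ))` and `J` is the all-one matrix. -/
noncomputable def Dmat {n : ℕ} [Fintype L] (a b : ℝ) (μ ν w : L → ℝ)
    (E : EdgeConf n L) : Matrix (Fin n) (Fin n) ℝ :=
  fun u v => prunedW a b w E u v - ((1 / 2) * ∑ ℓ, w ℓ * (a * μ ℓ + b * ν ℓ)) / n

/-- The spectral norm (ℓ²-operator norm) of a real square matrix. -/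
noncomputable def specNorm {n : ℕ} (M : Matrix (Fin n) (Fin n) ℝ) : ℝ :=
  ‖Matrix.toEuclideanCLM (𝕜 := ℝ) M‖

/-- The number of `k`-cycles carrying the label sequence `ℓ`, in the canonical
orientation: starting from the minimal-index vertex of the cycle toward its
neighbor of smaller index. -/
def cycleCount [DecidableEq L] (n k : ℕ) (E : EdgeConf n L) (ℓ : Fin k → L) : ℕ :=
  if hk : 0 < k then
    haveI : NeZero k := ⟨hk.ne'⟩
    (univ.filter fun c : Fin k → Fin n =>
      Function.Injective c ∧ (∀ i, c 0 ≤ c i) ∧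
      c 1 < c ⟨k - 1, Nat.sub_lt hk one_pos⟩ ∧
      ∀ i : Fin k, getLabel E (c i) (c (i + 1)) = some (ℓ i)).card
  else 0

/-- The Poisson probability mass function. -/
noncomputable def poissonPMF (m : ℝ) (j : ℕ) : ℝ :=
  Real.exp (-m) * m ^ j / (Nat.factorial j)

/-- The mean cycle count `λ([ℓ]_k)` under the labeled Erdős–Rényi model. -/
noncomputable def lamER [Fintype L] (a b : ℝ) (μ ν : L → ℝ) {k : ℕ} (ℓ : Fin k → L) : ℝ :=
  (1 / ((2 : ℝ) ^ (k + 1) * k)) * ∏ i, (a * μ (ℓ i) + b * ν (ℓ i))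

/-- The mean cycle count `ξ([ℓ]_k)` under the labeled SBM. -/
noncomputable def xiSBM [Fintype L] (a b : ℝ) (μ ν : L → ℝ) {k : ℕ} (ℓ : Fin k → L) : ℝ :=
  (1 / ((2 : ℝ) ^ (k + 1) * k)) *
    (∏ i, (a * μ (ℓ i) + b * ν (ℓ i)) + ∏ i, (a * μ (ℓ i) - b * ν (ℓ i)))

/-- The per-pair likelihood-ratio factor `W_{uv}(G, L, σ)` (SBM versus labeled
Erdős–Rényi), as a function of the pair status (`same` type or not) and the
edge/label information on the pair. -/
noncomputable def likPair (n : ℕ) (a b : ℝ) (μ ν : L → ℝ) (same : Bool) :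
    Option L → ℝ
  | some ℓ =>
      if same then 2 * a * μ ℓ / (a * μ ℓ + b * ν ℓ)
      else 2 * b * ν ℓ / (a * μ ℓ + b * ν ℓ)
  | none =>
      if same then (1 - a / n) / (1 - (a + b) / (2 * n))
      else (1 - b / n) / (1 - (a + b) / (2 * n))

/-- The likelihood ratio `Y_n = ℙ_n / ℙ'_n` of the labeled SBM with respect to the
labeled Erdős–Rényi model. -/
noncomputable def Ylik [Fintype L] (n : ℕ) (a b : ℝ) (μ ν : L → ℝ)
    (E : EdgeConf n L) : ℝ :=
  (1 / 2 : ℝ) ^ n * ∑ σ : Fin n → Bool,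
    ∏ p : Pairs n, likPair n a b μ ν (σ p.1.1 == σ p.1.2) (E p)


section abstractMoments

variable {X : Type*} [Fintype X] {n : ℕ}

/-- weight of a configuration, tilted by `s` -/
noncomputable def wt (q f : X → ℝ) (s : Pairs n → ℝ) (E : Pairs n → X) : ℝ :=
  ∏ p, (q (E p) * (1 + s p * f (E p)))

lemma wt_sum_prod (q f : X → ℝ) (s : Pairs n → ℝ) (g : Pairs n → X → ℝ) :
    ∑ E, wt q f s E * ∏ p, g p (E p) = ∏ p, ∑ x, q x * (1 + s p * f x) * g p x := by
  classical
  rw [Finset.prod_univ_sum]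
  simp only [wt, ← Finset.prod_mul_distrib, Fintype.piFinset_univ]

lemma wt_moment (q f : X → ℝ) (s : Pairs n → ℝ) (h1 : ∑ x, q x = 1) (h0 : ∑ x, q x * f x = 0)
    (C C' : Finset (Pairs n)) :
    ∑ E, wt q f s E * ((∏ p ∈ C, f (E p)) * ∏ p ∈ C', f (E p)) =
      (∏ p ∈ C ∩ C', (∑ x, q x * f x ^ 2 + s p * ∑ x, q x * f x ^ 3)) *
      ((∏ p ∈ C \ C', (s p * ∑ x, q x * f x ^ 2)) *
       ∏ p ∈ C' \ C, (s p * ∑ x, q x * f x ^ 2)) := by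
  classical
  have key : ∀ E : Pairs n → X, (∏ p ∈ C, f (E p)) * ∏ p ∈ C', f (E p) =
      ∏ p, ((if p ∈ C then f (E p) else 1) * (if p ∈ C' then f (E p) else 1)) := by
    intro E
    rw [Finset.prod_mul_distrib, Finset.prod_ite_mem, Finset.prod_ite_mem]
    simp
  simp_rw [key]
  rw [wt_sum_prod q f s (fun p x => (if p ∈ C then f x else 1) * (if p ∈ C' then f x else 1))]
  have e : ∀ (D : Finset (Pairs n)) (h : Pairs n → ℝ),
      ∏ p ∈ D, h p = ∏ p, if p ∈ D then h p else 1 := by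
    intro D h
    rw [Finset.prod_ite_mem]; simp
  rw [e (C ∩ C'), e (C \ C'), e (C' \ C), ← Finset.prod_mul_distrib, ← Finset.prod_mul_distrib]
  refine Finset.prod_congr rfl fun p _ => ?_
  have e1 : ∑ x, q x * (1 + s p * f x) * f x = s p * ∑ x, q x * f x ^ 2 := by
    have : ∀ x, q x * (1 + s p * f x) * f x = q x * f x + s p * (q x * f x ^ 2) := by
      intro x; ring
    simp_rw [this]
    rw [Finset.sum_add_distrib, h0, Finset.mul_sum, zero_add]
  by_cases hC : p ∈ C <;> by_cases hC' : p ∈ C' <;> simp [hC, hC']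
  · rw [Finset.mul_sum, ← Finset.sum_add_distrib]
    refine Finset.sum_congr rfl fun x _ => ?_
    ring
  · exact e1
  · exact e1
  · have : ∀ x, q x * (1 + s p * f x) = q x + s p * (q x * f x) := by
      intro x; ring
    simp_rw [this]
    rw [Finset.sum_add_distrib, ← Finset.mul_sum, h0, h1]; simp

lemma wt_moment1 (q f : X → ℝ) (s : Pairs n → ℝ) (h1 : ∑ x, q x = 1) (h0 : ∑ x, q x * f x = 0)
    (C : Finset (Pairs n)) :
    ∑ E, wt q f s E * (∏ p ∈ C, f (E p)) = ∏ p ∈ C, (s p * ∑ x, q x * f x ^ 2) := by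
  have := wt_moment q f s h1 h0 C ∅
  simpa using this

lemma wt_total (q f : X → ℝ) (s : Pairs n → ℝ) (h1 : ∑ x, q x = 1) (h0 : ∑ x, q x * f x = 0) :
    ∑ E, wt q f s E = 1 := by
  have := wt_moment1 q f s h1 h0 ∅
  simpa using this

lemma chebyshev {Ω : Type*} [Fintype Ω] (w T : Ω → ℝ) (hw : ∀ x, 0 ≤ w x) (m d : ℝ) (hd : 0 < d)
    (A : Set Ω) (hA : ∀ x ∈ A, d ≤ |T x - m|) :
    ∑ x, A.indicator w x ≤ (∑ x, w x * (T x - m) ^ 2) / d ^ 2 := by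
  classical
  rw [Finset.sum_div]
  refine Finset.sum_le_sum fun x _ => ?_
  by_cases hx : x ∈ A
  · rw [Set.indicator_of_mem hx, le_div_iff₀ (by positivity)]
    refine mul_le_mul_of_nonneg_left ?_ (hw x)
    rw [← sq_abs (T x - m)]
    exact pow_le_pow_left₀ hd.le (hA x hx) 2
  · rw [Set.indicator_of_notMem hx]
    have := hw x
    positivity

end abstractMoments

section cycles

variable {n m : ℕ}

abbrev Cyc (m n : ℕ) := ZMod (m + 3) ↪ Fin n

lemma z1 : (1 : ZMod (m + 3)) ≠ 0 := by
  intro h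
  have : ((1 : ℕ) : ZMod (m + 3)) = 0 := by exact_mod_cast h
  rw [ZMod.natCast_eq_zero_iff] at this
  have := Nat.le_of_dvd (by norm_num) this
  omega

lemma z2 : (1 + 1 : ZMod (m + 3)) ≠ 0 := by
  intro h
  have : ((2 : ℕ) : ZMod (m + 3)) = 0 := by
    rw [← h]; norm_num
  rw [ZMod.natCast_eq_zero_iff] at this
  have := Nat.le_of_dvd (by norm_num) this
  omega

lemma cyc_ne (c : Cyc m n) (i : ZMod (m + 3)) : c i ≠ c (i + 1) := by
  intro h
  have := c.injective h
  exact z1 (m := m) (by simpa using this)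

/-- the i-th edge of a cycle -/
def edge (c : Cyc m n) (i : ZMod (m + 3)) : Pairs n :=
  ⟨(min (c i) (c (i + 1)), max (c i) (c (i + 1))), min_lt_max.2 (cyc_ne c i)⟩

lemma edge_eq {c c' : Cyc m n} {i j : ZMod (m + 3)} (h : edge c i = edge c' j) :
    (c i = c' j ∧ c (i + 1) = c' (j + 1)) ∨ (c i = c' (j + 1) ∧ c (i + 1) = c' j) := by
  simp only [edge, Subtype.mk.injEq, Prod.mk.injEq] at h
  obtain ⟨h1, h2⟩ := h
  rcases le_total (c i) (c (i + 1)) with h | h <;>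
  rcases le_total (c' j) (c' (j + 1)) with h' | h' <;>
  simp [h, h'] at h1 h2 <;> simp [h1, h2]

lemma edge_inj (c : Cyc m n) : Function.Injective (edge c) := by
  intro i j h
  rcases edge_eq h with ⟨h1, _⟩ | ⟨h1, h2⟩
  · exact c.injective h1
  · have h1 := c.injective h1
    have h2 := c.injective h2
    exfalso
    apply z2 (m := m)
    rw [h1] at h2
    have : j + (1 + 1) = j + 0 := by rw [← add_assoc, h2, add_zero]
    exact add_left_cancel this

/-- edge set -/
def edges (c : Cyc m n) : Finset (Pairs n) := univ.image (edge c)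

def vset (c : Cyc m n) : Finset (Fin n) := univ.map c

lemma prod_edges {M : Type*} [CommMonoid M] (c : Cyc m n) (g : Pairs n → M) :
    ∏ p ∈ edges c, g p = ∏ i, g (edge c i) := by
  rw [edges, Finset.prod_image]
  exact fun i _ j _ h => edge_inj c h

lemma card_edges (c : Cyc m n) : (edges c).card = m + 3 := by
  rw [edges, Finset.card_image_of_injective _ (edge_inj c), Finset.card_univ, ZMod.card]

lemma card_vset (c : Cyc m n) : (vset c).card = m + 3 := by
  rw [vset, Finset.card_map, Finset.card_univ, ZMod.card]

lemma exists_boundary (I : Finset (ZMod (m + 3))) (h0 : I.Nonempty) (h1 : I ≠ univ) :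
    ∃ i ∈ I, i + 1 ∉ I := by
  by_contra hcon
  push Not at hcon
  apply h1
  obtain ⟨i, hi⟩ := h0
  have : ∀ j : ℕ, i + (j : ZMod (m + 3)) ∈ I := by
    intro j
    induction j with
    | zero => simpa using hi
    | succ j ih =>
      have := hcon _ ih
      rw [Nat.cast_succ, ← add_assoc]; exact this
  ext x
  simp only [Finset.mem_univ, iff_true]
  have h := this (x - i).val
  rw [ZMod.natCast_zmod_val] at h
  simpa using h

lemma overlap_card (c c' : Cyc m n) (hne : edges c ≠ edges c')
    (hI : (edges c ∩ edges c').Nonempty) :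
    (edges c ∩ edges c').card + 1 ≤ (vset c ∩ vset c').card := by
  classical
  set I : Finset (ZMod (m + 3)) := univ.filter fun i => edge c i ∈ edges c' with hIdef
  have hcard : (edges c ∩ edges c') = I.image (edge c) := by
    ext p
    simp only [edges, Finset.mem_inter, Finset.mem_image, Finset.mem_univ, true_and, hIdef,
      Finset.mem_filter]
    constructor
    · rintro ⟨⟨i, rfl⟩, j, hj⟩
      exact ⟨i, ⟨j, hj⟩, rfl⟩
    · rintro ⟨i, ⟨j, hj⟩, rfl⟩
      exact ⟨⟨i, rfl⟩, j, hj⟩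
  have hI0 : I.Nonempty := by
    rw [hcard] at hI
    simpa using hI
  have hI1 : I ≠ univ := by
    intro h
    apply hne
    apply Finset.eq_of_subset_of_card_le
    · intro p hp
      have : p ∈ edges c ∩ edges c' := by
        rw [hcard, h]; exact hp
      exact (Finset.mem_inter.1 this).2
    · rw [card_edges, card_edges]
  obtain ⟨i0, hi0, hi1⟩ := exists_boundary I hI0 hI1
  have hmem : ∀ i ∈ I, c i ∈ vset c' ∧ c (i + 1) ∈ vset c' := by
    intro i hi
    simp only [hIdef, edges, Finset.mem_filter, Finset.mem_univ, true_and, Finset.mem_image] at hi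
    obtain ⟨j, hj⟩ := hi
    simp only [vset, Finset.mem_map, Finset.mem_univ, true_and]
    rcases edge_eq hj with ⟨h1, h2⟩ | ⟨h1, h2⟩
    · exact ⟨⟨_, h1⟩, ⟨_, h2⟩⟩
    · exact ⟨⟨_, h2⟩, ⟨_, h1⟩⟩
  have hsub : (insert (i0 + 1) I).map c ⊆ vset c ∩ vset c' := by
    intro v hv
    simp only [Finset.mem_map, Finset.mem_insert] at hv
    obtain ⟨i, hi, rfl⟩ := hv
    refine Finset.mem_inter.2 ⟨by simp [vset], ?_⟩
    rcases hi with rfl | hi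
    · exact (hmem _ hi0).2
    · exact (hmem _ hi).1
  have := Finset.card_le_card hsub
  rw [Finset.card_map, Finset.card_insert_of_notMem hi1] at this
  rw [hcard, Finset.card_image_of_injective _ (edge_inj c)]
  exact this

lemma cyc_determined (c c' : Cyc m n) (h : edges c = edges c') (h0 : c 0 = c' 0)
    (h1 : c 1 = c' 1) : c = c' := by
  have key : ∀ j : ℕ, c (j : ZMod (m + 3)) = c' j ∧ c ((j : ZMod (m + 3)) + 1) = c' (j + 1) := by
    intro j
    induction j with
    | zero => simpa using ⟨h0, h1⟩
    | succ j ih =>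
      rw [Nat.cast_succ]
      refine ⟨ih.2, ?_⟩
      have hmem : edge c ((j : ZMod (m + 3)) + 1) ∈ edges c' := by
        rw [← h]; simp [edges]
      simp only [edges, Finset.mem_image, Finset.mem_univ, true_and] at hmem
      obtain ⟨i, hi⟩ := hmem
      rcases edge_eq hi with ⟨e1, e2⟩ | ⟨e1, e2⟩
      · rw [ih.2] at e1
        have := c'.injective e1
        rw [← e2, this]
      · rw [ih.2] at e2
        have e3 := c'.injective e2
        have e4 : i = j := add_right_cancel e3
        rw [e4, ← ih.1] at e1
        have e5 := c.injective e1
        exfalso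
        apply z2 (m := m)
        have : (j : ZMod (m + 3)) + (1 + 1) = j + 0 := by rw [← add_assoc, ← e5, add_zero]
        exact add_left_cancel this
  ext1 x
  have := (key x.val).1
  rwa [ZMod.natCast_zmod_val] at this

lemma vset_of_edges (c c' : Cyc m n) (h : edges c = edges c') (i : ZMod (m + 3)) :
    c i ∈ vset c' := by
  have hmem : edge c i ∈ edges c' := by
    rw [← h]; simp [edges]
  simp only [edges, Finset.mem_image, Finset.mem_univ, true_and] at hmem
  obtain ⟨j, hj⟩ := hmem
  simp only [vset, Finset.mem_map, Finset.mem_univ, true_and]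
  rcases edge_eq hj with ⟨h1, h2⟩ | ⟨h1, h2⟩
  · exact ⟨_, h1⟩
  · exact ⟨_, h2⟩

open Classical in
lemma fibre_card (c : Cyc m n) :
    (univ.filter fun c' : Cyc m n => edges c = edges c').card ≤ (m + 3) ^ 2 := by
  have : (univ.filter fun c' : Cyc m n => edges c = edges c').card ≤
      (vset c ×ˢ vset c).card := by
    refine Finset.card_le_card_of_injOn (fun c' => (c' 0, c' 1)) ?_ ?_
    · intro c' hc'
      simp only [Finset.coe_filter, Finset.mem_univ, true_and, Set.mem_ofPred_eq] at hc'
      simp only [Finset.coe_product, Set.mem_prod, Finset.mem_coe]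
      exact ⟨vset_of_edges c' c hc'.symm 0, vset_of_edges c' c hc'.symm 1⟩
    · intro c1 h1 c2 h2 h
      simp only [Finset.coe_filter, Finset.mem_univ, true_and, Set.mem_ofPred_eq] at h1 h2
      simp only [Prod.mk.injEq] at h
      exact cyc_determined c1 c2 (h1.symm.trans h2) h.1 h.2
  rw [Finset.card_product, card_vset] at this
  rw [sq]; exact this

/-- counting functions by image size -/
lemma sum_image_bound {ι : Type*} [Fintype ι] [DecidableEq ι] (hn : 0 < n) :
    ∑ g : ι → Fin n, (1 / (n : ℝ)) ^ (univ.image g).card ≤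
      (Fintype.card ι + 1) * (Fintype.card ι : ℝ) ^ Fintype.card ι := by
  classical
  set d := Fintype.card ι with hd
  have hle : ∀ g : ι → Fin n, (univ.image g).card ∈ Finset.range (d + 1) := by
    intro g
    rw [Finset.mem_range, Nat.lt_succ_iff]
    exact Finset.card_image_le.trans (by rw [Finset.card_univ])
  rw [← Finset.sum_fiberwise_of_maps_to (t := Finset.range (d + 1)) (fun g _ => hle g)]
  have hb : ∀ s ∈ Finset.range (d + 1),
      ∑ g ∈ univ.filter (fun g : ι → Fin n => (univ.image g).card = s),
        (1 / (n : ℝ)) ^ (univ.image g).card ≤ (d : ℝ) ^ d := by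
    intro s hs
    rw [Finset.mem_range, Nat.lt_succ_iff] at hs
    have h1 : ∑ g ∈ univ.filter (fun g : ι → Fin n => (univ.image g).card = s),
        (1 / (n : ℝ)) ^ (univ.image g).card =
        (univ.filter (fun g : ι → Fin n => (univ.image g).card = s)).card * (1 / (n : ℝ)) ^ s := by
      rw [← nsmul_eq_mul, ← Finset.sum_const]
      refine Finset.sum_congr rfl fun g hg => ?_
      rw [(Finset.mem_filter.1 hg).2]
    rw [h1]
    have h2 : (univ.filter (fun g : ι → Fin n => (univ.image g).card = s)) ⊆
        (Finset.powersetCard s (univ : Finset (Fin n))).biUnion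
          (fun S => Fintype.piFinset (fun _ : ι => S)) := by
      intro g hg
      rw [Finset.mem_biUnion]
      refine ⟨univ.image g, ?_, ?_⟩
      · rw [Finset.mem_powersetCard]
        exact ⟨Finset.subset_univ _, (Finset.mem_filter.1 hg).2⟩
      · rw [Fintype.mem_piFinset]
        intro i; simp
    have h3 : (univ.filter (fun g : ι → Fin n => (univ.image g).card = s)).card ≤ n ^ s * d ^ d := by
      refine (Finset.card_le_card h2).trans (Finset.card_biUnion_le.trans ?_)
      have : ∀ S ∈ Finset.powersetCard s (univ : Finset (Fin n)),
          (Fintype.piFinset (fun _ : ι => S)).card ≤ d ^ d := by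
        intro S hS
        rw [Fintype.card_piFinset, Finset.prod_const, Finset.card_univ, (Finset.mem_powersetCard.1 hS).2]
        exact Nat.pow_le_pow_left hs _
      refine (Finset.sum_le_sum this).trans ?_
      rw [Finset.sum_const, Finset.card_powersetCard, Finset.card_univ, Fintype.card_fin, smul_eq_mul]
      exact Nat.mul_le_mul_right _ (Nat.choose_le_pow n s)
    have hn' : (0 : ℝ) < n := by exact_mod_cast hn
    calc _ ≤ ((n : ℝ) ^ s * (d : ℝ) ^ d) * (1 / (n : ℝ)) ^ s := by
          refine mul_le_mul_of_nonneg_right ?_ (by positivity)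
          exact_mod_cast h3
      _ = (d : ℝ) ^ d := by
          rw [one_div, inv_pow]; field_simp
  refine (Finset.sum_le_sum hb).trans ?_
  rw [Finset.sum_const, Finset.card_range, nsmul_eq_mul]
  push_cast
  exact le_refl _

lemma sum_cyc_bound (hn : 0 < n) :
    ∑ c : Cyc m n, ∑ c' : Cyc m n, (1 / (n : ℝ)) ^ (vset c ∪ vset c').card ≤
      ((2 * (m + 3) : ℕ) + 1) * ((2 * (m + 3) : ℕ) : ℝ) ^ (2 * (m + 3)) := by
  classical
  have h := sum_image_bound (n := n) (ι := ZMod (m + 3) ⊕ ZMod (m + 3)) hn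
  have hc : Fintype.card (ZMod (m + 3) ⊕ ZMod (m + 3)) = 2 * (m + 3) := by
    rw [Fintype.card_sum, ZMod.card]; ring
  rw [hc] at h
  refine le_trans ?_ h
  rw [← Finset.sum_product' , Finset.univ_product_univ]
  have hinj : Function.Injective
      (fun x : Cyc m n × Cyc m n => (Sum.elim x.1 x.2 : ZMod (m + 3) ⊕ ZMod (m + 3) → Fin n)) := by
    rintro ⟨c, c'⟩ ⟨d, d'⟩ h
    simp only [Prod.mk.injEq]
    constructor
    · ext1 i; exact congrFun h (Sum.inl i)
    · ext1 i; exact congrFun h (Sum.inr i)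
  have heq : ∀ x : Cyc m n × Cyc m n, vset x.1 ∪ vset x.2 =
      univ.image (Sum.elim x.1 x.2 : ZMod (m + 3) ⊕ ZMod (m + 3) → Fin n) := by
    intro x
    ext v
    simp [vset]
  simp_rw [heq]
  rw [← Finset.sum_image (f := fun g : ZMod (m + 3) ⊕ ZMod (m + 3) → Fin n =>
    (1 / (n : ℝ)) ^ (univ.image g).card) (fun x _ y _ h => hinj h)]
  refine Finset.sum_le_sum_of_subset_of_nonneg (Finset.subset_univ _) fun _ _ _ => ?_
  positivity

end cycles

section signs

variable {n m : ℕ}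

/-- sign of a pair -/
def sg (σ : Fin n → Bool) (p : Pairs n) : ℝ := signVec σ p.1.1 * signVec σ p.1.2

lemma signVec_sq (σ : Fin n → Bool) (u : Fin n) : signVec σ u * signVec σ u = 1 := by
  unfold signVec; split_ifs <;> norm_num

lemma sg_sq (σ : Fin n → Bool) (p : Pairs n) : sg σ p * sg σ p = 1 := by
  have h1 := signVec_sq σ p.1.1
  have h2 := signVec_sq σ p.1.2
  unfold sg
  calc _ = (signVec σ p.1.1 * signVec σ p.1.1) * (signVec σ p.1.2 * signVec σ p.1.2) := by ring
    _ = 1 := by rw [h1, h2, one_mul]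

lemma sg_abs (σ : Fin n → Bool) (p : Pairs n) : |sg σ p| = 1 := by
  have h := sg_sq σ p
  have : |sg σ p| * |sg σ p| = 1 := by rw [← abs_mul, h, abs_one]
  have h0 := abs_nonneg (sg σ p)
  nlinarith

lemma sg_edge (σ : Fin n → Bool) (c : Cyc m n) (i : ZMod (m + 3)) :
    sg σ (edge c i) = signVec σ (c i) * signVec σ (c (i + 1)) := by
  unfold sg edge
  rcases le_total (c i) (c (i + 1)) with h | h
  · simp [h]
  · simp [h, mul_comm]

lemma prod_sg (σ : Fin n → Bool) (c : Cyc m n) : ∏ i, sg σ (edge c i) = 1 := by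
  simp_rw [sg_edge]
  rw [Finset.prod_mul_distrib]
  have : ∏ i, signVec σ (c (i + 1)) = ∏ i, signVec σ (c i) :=
    Fintype.prod_equiv (Equiv.addRight (1 : ZMod (m + 3))) _ _ (fun i => rfl)
  rw [this, ← Finset.prod_mul_distrib]
  exact Finset.prod_eq_one fun i _ => signVec_sq σ _

lemma sum_prod_sg (c : Cyc m n) (I : Finset (ZMod (m + 3))) (h0 : I.Nonempty) (h1 : I ≠ univ) :
    ∑ σ : Fin n → Bool, ∏ i ∈ I, sg σ (edge c i) = 0 := by
  classical
  obtain ⟨i, hi, hi'⟩ := exists_boundary I h0 h1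
  set v := c (i + 1) with hv
  have hflip : ∀ σ : Fin n → Bool,
      ∏ j ∈ I, sg (Function.update σ v (!σ v)) (edge c j) = - ∏ j ∈ I, sg σ (edge c j) := by
    intro σ
    have hs : ∀ u, u ≠ v → signVec (Function.update σ v (!σ v)) u = signVec σ u := by
      intro u hu
      simp [signVec, Function.update_of_ne hu]
    have hsv : signVec (Function.update σ v (!σ v)) v = - signVec σ v := by
      simp only [signVec, Function.update_self]
      cases σ v <;> simp
    rw [← Finset.mul_prod_erase _ _ hi, ← Finset.mul_prod_erase _ _ hi, ← neg_mul]
    congr 1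
    · rw [sg_edge, sg_edge, ← hv, hsv, hs _ (cyc_ne c i)]; ring
    · refine Finset.prod_congr rfl fun j hj => ?_
      rw [Finset.mem_erase] at hj
      rw [sg_edge, sg_edge, hs, hs]
      · intro h
        have := c.injective h
        exact hj.1 (add_right_cancel this)
      · intro h
        have := c.injective h
        exact hi' (this ▸ hj.2)
  refine Finset.sum_involution (fun σ _ => Function.update σ v (!σ v)) ?_ ?_ ?_ ?_
  · intro σ _
    rw [hflip]; ring
  · intro σ _ _ h
    have := congrFun h v
    simp at this
  · intro σ _; simp
  · intro σ _; simp

lemma half_pow_card : (1 / 2 : ℝ) ^ n * ∑ _σ : Fin n → Bool, (1 : ℝ) = 1 := by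
  simp

lemma diag_avg (c : Cyc m n) (t r : ℝ) (hr : |r| ≤ t) :
    (1 / 2 : ℝ) ^ n * ∑ σ : Fin n → Bool, ∏ p ∈ edges c, (t + sg σ p * r) ≤ 2 * t ^ (m + 3) := by
  classical
  have e : ∀ σ : Fin n → Bool, ∏ p ∈ edges c, (t + sg σ p * r) =
      ∑ I ∈ (univ : Finset (ZMod (m + 3))).powerset,
        (∏ i ∈ I, sg σ (edge c i)) * (r ^ I.card * t ^ (univ \ I).card) := by
    intro σ
    rw [prod_edges]
    have : ∀ i, t + sg σ (edge c i) * r = sg σ (edge c i) * r + t := fun i => add_comm _ _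
    simp_rw [this]
    rw [Finset.prod_add]
    refine Finset.sum_congr rfl fun I _ => ?_
    rw [Finset.prod_mul_distrib, Finset.prod_const, Finset.prod_const, mul_assoc]
  simp_rw [e]
  rw [Finset.sum_comm]
  simp_rw [← Finset.sum_mul]
  rw [Finset.sum_eq_add (∅ : Finset (ZMod (m + 3))) univ]
  · simp only [Finset.prod_empty, Finset.card_empty, pow_zero, one_mul, Finset.sdiff_empty,
      prod_sg, Finset.sdiff_self, Finset.card_univ, ZMod.card, mul_one]
    rw [← mul_add, ← mul_assoc, half_pow_card, one_mul]
    have : r ^ (m + 3) ≤ t ^ (m + 3) :=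
      (le_abs_self _).trans (by rw [abs_pow]; exact pow_le_pow_left₀ (abs_nonneg r) hr _)
    linarith
  · exact Finset.univ_nonempty.ne_empty.symm
  · intro I _ hI
    rw [sum_prod_sg c I (Finset.nonempty_iff_ne_empty.2 hI.1) hI.2, zero_mul]
  · intro h; simp at h
  · intro h; simp at h

end signs

section second

variable {X : Type*} [Fintype X] {n m : ℕ}

/-- cycle statistic -/
noncomputable def Tst (m : ℕ) (f : X → ℝ) (E : Pairs n → X) : ℝ :=
  ∑ c : Cyc m n, ∏ p ∈ edges c, f (E p)

lemma sum_T (q f : X → ℝ) (s : Pairs n → ℝ) (h1 : ∑ x, q x = 1) (h0 : ∑ x, q x * f x = 0) :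
    ∑ E, wt q f s E * Tst m f E =
      ∑ c : Cyc m n, ∏ p ∈ edges c, (s p * ∑ x, q x * f x ^ 2) := by
  simp_rw [Tst, Finset.mul_sum]
  rw [Finset.sum_comm]
  refine Finset.sum_congr rfl fun c _ => ?_
  rw [wt_moment1 q f s h1 h0]
  simp_rw [Finset.mul_sum]

/-- pair moment -/
noncomputable def Wm (t r : ℝ) (s : Pairs n → ℝ) (C C' : Finset (Pairs n)) : ℝ :=
  (∏ p ∈ C ∩ C', (t + s p * r)) * ((∏ p ∈ C \ C', (s p * t)) * ∏ p ∈ C' \ C, (s p * t))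

lemma sum_T2 (q f : X → ℝ) (s : Pairs n → ℝ) (h1 : ∑ x, q x = 1) (h0 : ∑ x, q x * f x = 0) :
    ∑ E, wt q f s E * Tst m f E ^ 2 =
      ∑ c : Cyc m n, ∑ c' : Cyc m n,
        Wm (∑ x, q x * f x ^ 2) (∑ x, q x * f x ^ 3) s (edges c) (edges c') := by
  have : ∀ E : Pairs n → X, wt q f s E * Tst m f E ^ 2 = ∑ c : Cyc m n, ∑ c' : Cyc m n,
      wt q f s E * ((∏ p ∈ edges c, f (E p)) * ∏ p ∈ edges c', f (E p)) := by
    intro E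
    rw [Tst, sq, Finset.sum_mul_sum, Finset.mul_sum]
    refine Finset.sum_congr rfl fun c _ => ?_
    rw [Finset.mul_sum]
  simp_rw [this]
  rw [Finset.sum_comm]
  refine Finset.sum_congr rfl fun c _ => ?_
  rw [Finset.sum_comm]
  refine Finset.sum_congr rfl fun c' _ => ?_
  rw [wt_moment q f s h1 h0, Wm]

lemma er_T2 (q f : X → ℝ) (h1 : ∑ x, q x = 1) (h0 : ∑ x, q x * f x = 0)
    (ht : 0 ≤ ∑ x, q x * f x ^ 2) :
    ∑ E : Pairs n → X, wt q f (fun _ => 0) E * Tst m f E ^ 2 ≤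
      ((m + 3 : ℕ) : ℝ) ^ 2 * (Fintype.card (Cyc m n) * (∑ x, q x * f x ^ 2) ^ (m + 3)) := by
  classical
  rw [sum_T2 q f _ h1 h0]
  set t := ∑ x, q x * f x ^ 2
  set r := ∑ x, q x * f x ^ 3
  have hW : ∀ c c' : Cyc m n, Wm t r (fun _ => 0) (edges c) (edges c') =
      if edges c = edges c' then t ^ (m + 3) else 0 := by
    intro c c'
    split_ifs with h
    · rw [← h, Wm]; simp [card_edges]
    · rw [Wm]
      have : (edges c \ edges c').Nonempty := by
        rw [Finset.sdiff_nonempty]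
        intro hs
        exact h (Finset.eq_of_subset_of_card_le hs (by rw [card_edges, card_edges]))
      obtain ⟨p, hp⟩ := this
      rw [Finset.prod_eq_zero hp (by ring)]
      ring
  simp_rw [hW]
  have hb : ∀ c : Cyc m n, ∑ c' : Cyc m n, (if edges c = edges c' then t ^ (m + 3) else 0) ≤
      ((m + 3 : ℕ) : ℝ) ^ 2 * t ^ (m + 3) := by
    intro c
    rw [← Finset.sum_filter, Finset.sum_const, nsmul_eq_mul]
    refine mul_le_mul_of_nonneg_right ?_ (by positivity)
    exact_mod_cast fibre_card c
  refine (Finset.sum_le_sum fun c _ => hb c).trans ?_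
  rw [Finset.sum_const, Finset.card_univ, nsmul_eq_mul]
  apply le_of_eq; ring

lemma sbm_T (q f : X → ℝ) (h1 : ∑ x, q x = 1) (h0 : ∑ x, q x * f x = 0) (σ : Fin n → Bool) :
    ∑ E : Pairs n → X, wt q f (sg σ) E * Tst m f E =
      Fintype.card (Cyc m n) * (∑ x, q x * f x ^ 2) ^ (m + 3) := by
  rw [sum_T q f _ h1 h0]
  have : ∀ c : Cyc m n, ∏ p ∈ edges c, (sg σ p * ∑ x, q x * f x ^ 2) =
      (∑ x, q x * f x ^ 2) ^ (m + 3) := by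
    intro c
    rw [Finset.prod_mul_distrib, Finset.prod_const, card_edges, prod_edges, prod_sg, one_mul]
  simp_rw [this]
  rw [Finset.sum_const, Finset.card_univ, nsmul_eq_mul]

lemma off_bound (t r B : ℝ) (hn : 0 < n) (ht0 : 0 ≤ t) (ht1 : t ≤ 1) (hB : 1 ≤ B)
    (htB : t ≤ B / n) (hr : |r| ≤ t) (σ : Fin n → Bool) (c c' : Cyc m n)
    (hne : edges c ≠ edges c') (hI : (edges c ∩ edges c').Nonempty) :
    Wm t r (sg σ) (edges c) (edges c') ≤
      2 ^ (m + 3) * B ^ (2 * (m + 3) + 1) * (1 / n) * (1 / (n : ℝ)) ^ (vset c ∪ vset c').card := by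
  classical
  have hn' : (0 : ℝ) < n := by exact_mod_cast hn
  have hov := overlap_card c c' hne hI
  set j := (edges c ∩ edges c').card with hj
  have hU := Finset.card_union_add_card_inter (vset c) (vset c')
  rw [card_vset, card_vset] at hU
  have hd1 := Finset.card_sdiff_add_card_inter (edges c) (edges c')
  have hd2 := Finset.card_sdiff_add_card_inter (edges c') (edges c)
  rw [card_edges] at hd1 hd2
  rw [Finset.inter_comm] at hd2
  set U := (vset c ∪ vset c').card with hUdef
  have habs : |Wm t r (sg σ) (edges c) (edges c')| ≤
      (2 * t) ^ j * (t ^ (edges c \ edges c').card * t ^ (edges c' \ edges c).card) := by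
    rw [Wm, abs_mul, abs_mul, Finset.abs_prod, Finset.abs_prod, Finset.abs_prod]
    have hs : ∀ D : Finset (Pairs n), ∏ p ∈ D, |sg σ p * t| = t ^ D.card := by
      intro D
      rw [← Finset.prod_const]
      refine Finset.prod_congr rfl fun p _ => ?_
      rw [abs_mul, sg_abs, one_mul, abs_of_nonneg ht0]
    rw [hs, hs]
    refine mul_le_mul_of_nonneg_right ?_ (by positivity)
    rw [hj, ← Finset.prod_const]
    refine Finset.prod_le_prod (fun _ _ => abs_nonneg _) fun p _ => ?_
    refine (abs_add_le _ _).trans ?_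
    rw [abs_mul, sg_abs, one_mul, abs_of_nonneg ht0]
    linarith
  refine (le_abs_self _).trans (habs.trans ?_)
  have e1 : (2 * t) ^ j * (t ^ (edges c \ edges c').card * t ^ (edges c' \ edges c).card) =
      2 ^ j * t ^ (j + (edges c \ edges c').card + (edges c' \ edges c).card) := by
    rw [mul_pow]; ring
  rw [e1]
  have hexp : U + 1 ≤ j + (edges c \ edges c').card + (edges c' \ edges c).card := by omega
  have e2 : t ^ (j + (edges c \ edges c').card + (edges c' \ edges c).card) ≤ t ^ (U + 1) :=
    pow_le_pow_of_le_one ht0 ht1 hexp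
  have e3 : t ^ (U + 1) ≤ (B / n) ^ (U + 1) := pow_le_pow_left₀ ht0 htB _
  have e4 : (B / n) ^ (U + 1) = B ^ (U + 1) * ((1 / n) * (1 / (n : ℝ)) ^ U) := by
    rw [div_eq_mul_one_div, mul_pow]; ring
  have e5 : B ^ (U + 1) ≤ B ^ (2 * (m + 3) + 1) := pow_le_pow_right₀ hB (by omega)
  have e6 : (2 : ℝ) ^ j ≤ 2 ^ (m + 3) := pow_le_pow_right₀ (by norm_num) (by omega)
  calc _ ≤ 2 ^ (m + 3) * (B ^ (2 * (m + 3) + 1) * ((1 / n) * (1 / (n : ℝ)) ^ U)) := by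
        refine mul_le_mul e6 (e2.trans (e3.trans ?_)) (by positivity) (by positivity)
        rw [e4]
        exact mul_le_mul_of_nonneg_right e5 (by positivity)
    _ = _ := by ring

lemma avg_W (t r B : ℝ) (hn : 0 < n) (ht0 : 0 ≤ t) (ht1 : t ≤ 1) (hB : 1 ≤ B)
    (htB : t ≤ B / n) (hr : |r| ≤ t) (c c' : Cyc m n) :
    (1 / 2 : ℝ) ^ n * ∑ σ : Fin n → Bool, Wm t r (sg σ) (edges c) (edges c') ≤
      (t ^ (m + 3) * t ^ (m + 3) + (if edges c = edges c' then 2 * t ^ (m + 3) else 0)) +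
      2 ^ (m + 3) * B ^ (2 * (m + 3) + 1) * (1 / n) * (1 / (n : ℝ)) ^ (vset c ∪ vset c').card := by
  classical
  have hn' : (0 : ℝ) < n := by exact_mod_cast hn
  have hp3 : 0 ≤ 2 ^ (m + 3) * B ^ (2 * (m + 3) + 1) * (1 / n) *
    (1 / (n : ℝ)) ^ (vset c ∪ vset c').card := by positivity
  have hp1 : 0 ≤ t ^ (m + 3) * t ^ (m + 3) := by positivity
  by_cases h : edges c = edges c'
  · rw [if_pos h, ← h]
    have e : ∀ σ : Fin n → Bool, Wm t r (sg σ) (edges c) (edges c) =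
        ∏ p ∈ edges c, (t + sg σ p * r) := by
      intro σ; simp [Wm]
    simp_rw [e]
    have := diag_avg c t r hr
    linarith
  · rw [if_neg h]
    by_cases hI : (edges c ∩ edges c').Nonempty
    · have hb := Finset.sum_le_sum fun (σ : Fin n → Bool) (_ : σ ∈ univ) =>
        off_bound t r B hn ht0 ht1 hB htB hr σ c c' h hI
      have hb' := mul_le_mul_of_nonneg_left hb (by positivity : (0 : ℝ) ≤ (1 / 2) ^ n)
      refine hb'.trans ?_
      rw [← one_mul (_ * _ * _ * _), ← Finset.sum_mul, ← mul_assoc, half_pow_card]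
      linarith
    · rw [Finset.not_nonempty_iff_eq_empty] at hI
      have hd : Disjoint (edges c) (edges c') := Finset.disjoint_iff_inter_eq_empty.2 hI
      have e : ∀ σ : Fin n → Bool, Wm t r (sg σ) (edges c) (edges c') =
          1 * (t ^ (m + 3) * t ^ (m + 3)) := by
        intro σ
        have e1 : ∀ c : Cyc m n, ∏ p ∈ edges c, (sg σ p * t) = t ^ (m + 3) := by
          intro c
          rw [Finset.prod_mul_distrib, Finset.prod_const, card_edges, prod_edges, prod_sg, one_mul]
        rw [Wm, hI, Finset.sdiff_eq_self_of_disjoint hd, Finset.sdiff_eq_self_of_disjoint hd.symm,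
          e1, e1]
        simp
      simp_rw [e]
      rw [← Finset.sum_mul, ← mul_assoc, half_pow_card]
      linarith

lemma sbm_var (q f : X → ℝ) (h1 : ∑ x, q x = 1) (h0 : ∑ x, q x * f x = 0)
    (hq : ∀ x, 0 ≤ q x) (hf : ∀ x, |f x| ≤ 1) (B : ℝ) (hB : 1 ≤ B) (hn : 0 < n)
    (htB : ∑ x, q x * f x ^ 2 ≤ B / n) (M : ℝ)
    (hM : M = Fintype.card (Cyc m n) * (∑ x, q x * f x ^ 2) ^ (m + 3)) :
    (1 / 2 : ℝ) ^ n * ∑ σ : Fin n → Bool, ∑ E : Pairs n → X,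
        wt q f (sg σ) E * (Tst m f E - M) ^ 2 ≤
      2 * ((m + 3 : ℕ) : ℝ) ^ 2 * M +
        (2 ^ (m + 3) * B ^ (2 * (m + 3) + 1) *
        (((2 * (m + 3) : ℕ) + 1) * ((2 * (m + 3) : ℕ) : ℝ) ^ (2 * (m + 3)))) * (1 / n) := by
  classical
  have hn' : (0 : ℝ) < n := by exact_mod_cast hn
  have hexp : ∀ σ : Fin n → Bool, ∑ E : Pairs n → X, wt q f (sg σ) E * (Tst m f E - M) ^ 2 =
      ∑ E : Pairs n → X, wt q f (sg σ) E * Tst m f E ^ 2 - 1 * M ^ 2 := by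
    intro σ
    have e : ∀ E : Pairs n → X, wt q f (sg σ) E * (Tst m f E - M) ^ 2 =
        wt q f (sg σ) E * Tst m f E ^ 2 - (2 * M) * (wt q f (sg σ) E * Tst m f E)
          + M ^ 2 * wt q f (sg σ) E := by
      intro E; ring
    simp_rw [e]
    rw [Finset.sum_add_distrib, Finset.sum_sub_distrib, ← Finset.mul_sum, ← Finset.mul_sum,
      sbm_T q f h1 h0 σ, wt_total q f _ h1 h0, ← hM]
    ring
  simp_rw [hexp]
  rw [Finset.sum_sub_distrib, ← Finset.sum_mul, mul_sub, ← mul_assoc, half_pow_card, one_mul]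
  simp_rw [sum_T2 q f _ h1 h0]
  have ht0 : 0 ≤ ∑ x, q x * f x ^ 2 :=
    Finset.sum_nonneg fun x _ => mul_nonneg (hq x) (sq_nonneg _)
  have ht1 : ∑ x, q x * f x ^ 2 ≤ 1 := by
    rw [← h1]
    refine Finset.sum_le_sum fun x _ => mul_le_of_le_one_right (hq x) ?_
    rw [← sq_abs]
    exact pow_le_one₀ (abs_nonneg _) (hf x)
  have hr : |∑ x, q x * f x ^ 3| ≤ ∑ x, q x * f x ^ 2 := by
    refine (Finset.abs_sum_le_sum_abs _ _).trans (Finset.sum_le_sum fun x _ => ?_)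
    rw [abs_mul, abs_of_nonneg (hq x), abs_pow]
    refine mul_le_mul_of_nonneg_left ?_ (hq x)
    rw [← sq_abs (f x)]
    exact pow_le_pow_of_le_one (abs_nonneg _) (hf x) (by norm_num)
  set t := ∑ x, q x * f x ^ 2
  set r := ∑ x, q x * f x ^ 3
  have hswap : (1 / 2 : ℝ) ^ n * ∑ σ : Fin n → Bool, ∑ c : Cyc m n, ∑ c' : Cyc m n,
        Wm t r (sg σ) (edges c) (edges c') =
      ∑ c : Cyc m n, ∑ c' : Cyc m n, (1 / 2 : ℝ) ^ n *
        ∑ σ : Fin n → Bool, Wm t r (sg σ) (edges c) (edges c') := by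
    rw [Finset.sum_comm, Finset.mul_sum]
    refine Finset.sum_congr rfl fun c _ => ?_
    rw [Finset.sum_comm, Finset.mul_sum]
  rw [hswap]
  have hle := Finset.sum_le_sum fun (c : Cyc m n) (_ : c ∈ univ) =>
    Finset.sum_le_sum fun (c' : Cyc m n) (_ : c' ∈ univ) =>
      avg_W t r B hn ht0 ht1 hB htB hr c c'
  simp_rw [Finset.sum_add_distrib, ← Finset.mul_sum] at hle
  have hb : ∀ c : Cyc m n, ∑ c' : Cyc m n, (if edges c = edges c' then 2 * t ^ (m + 3) else 0) ≤
      ((m + 3 : ℕ) : ℝ) ^ 2 * (2 * t ^ (m + 3)) := by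
    intro c
    rw [← Finset.sum_filter, Finset.sum_const, nsmul_eq_mul]
    refine mul_le_mul_of_nonneg_right ?_ (by positivity)
    exact_mod_cast fibre_card c
  have hb' := Finset.sum_le_sum fun (c : Cyc m n) (_ : c ∈ univ) => hb c
  rw [Finset.sum_const, Finset.card_univ, nsmul_eq_mul] at hb'
  have hb3 := mul_le_mul_of_nonneg_left (sum_cyc_bound (m := m) hn)
    (by positivity : 0 ≤ 2 ^ (m + 3) * B ^ (2 * (m + 3) + 1) * (1 / (n : ℝ)))
  have hb1 : ∑ _c : Cyc m n, ∑ _c' : Cyc m n, t ^ (m + 3) * t ^ (m + 3) = M ^ 2 := by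
    simp_rw [Finset.sum_const, Finset.card_univ, nsmul_eq_mul]
    rw [hM]; ring
  have hb2 : (Fintype.card (Cyc m n) : ℝ) * (((m + 3 : ℕ) : ℝ) ^ 2 * (2 * t ^ (m + 3))) =
      2 * ((m + 3 : ℕ) : ℝ) ^ 2 * M := by
    rw [hM]; ring
  rw [hb2] at hb'
  simp only [Finset.sum_const, Finset.card_univ, nsmul_eq_mul] at hle hb1
  simp_rw [← Finset.mul_sum]
  have hb1' : t ^ (m + 3) * ((Fintype.card (Cyc m n) : ℝ) *
      ((Fintype.card (Cyc m n) : ℝ) * t ^ (m + 3))) = M ^ 2 := by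
    rw [hM]; ring
  rw [hb1'] at hle
  rw [mul_right_comm (2 ^ (m + 3) * B ^ (2 * (m + 3) + 1))]
  linarith

end second

section concrete

variable [Fintype L]

/-- normalized likelihood difference -/
noncomputable def ff (n : ℕ) (a b : ℝ) (μ ν : L → ℝ) : Option L → ℝ
  | none => ((b - a) / n) / (2 - (a + b) / n)
  | some ℓ => (a * μ ℓ - b * ν ℓ) / (a * μ ℓ + b * ν ℓ)

variable {n : ℕ} {a b : ℝ} {μ ν : L → ℝ}

lemma q_nonneg (ha : 0 < a) (hb : 0 < b) (hμ : IsProbVec μ) (hν : IsProbVec ν)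
    (han : a < n) (hbn : b < n) (x : Option L) : 0 ≤ erPairMass n a b μ ν x := by
  have hn : (0 : ℝ) < n := ha.trans han
  cases x with
  | none =>
    simp only [erPairMass]
    rw [sub_nonneg, div_le_one (by positivity)]
    linarith
  | some ℓ =>
    have h1 := hμ.1 ℓ
    have h2 := hν.1 ℓ
    simp only [erPairMass]
    positivity

lemma q_some (ha : 0 < a) (hb : 0 < b) (ℓ : L) :
    erPairMass n a b μ ν (some ℓ) = (a * μ ℓ + b * ν ℓ) / (2 * n) := by
  have : a + b ≠ 0 := by positivity
  simp only [erPairMass]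
  by_cases hn : (n : ℝ) = 0
  · simp [hn]
  · field_simp

lemma sum_lin (hμ : IsProbVec μ) (hν : IsProbVec ν) (x y d : ℝ) :
    ∑ ℓ, (x * μ ℓ + y * ν ℓ) / d = (x + y) / d := by
  rw [← Finset.sum_div, Finset.sum_add_distrib, ← Finset.mul_sum, ← Finset.mul_sum, hμ.2, hν.2]
  simp

lemma q_sum (ha : 0 < a) (hb : 0 < b) (hμ : IsProbVec μ) (hν : IsProbVec ν) :
    ∑ x, erPairMass n a b μ ν x = 1 := by
  rw [Fintype.sum_option]
  simp_rw [q_some ha hb]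
  rw [sum_lin hμ hν]
  simp [erPairMass]

lemma den_zero (ha : 0 < a) (hb : 0 < b) (hμ : IsProbVec μ) (hν : IsProbVec ν) (ℓ : L)
    (h : a * μ ℓ + b * ν ℓ = 0) : a * μ ℓ = 0 ∧ b * ν ℓ = 0 := by
  have h1 := mul_nonneg ha.le (hμ.1 ℓ)
  have h2 := mul_nonneg hb.le (hν.1 ℓ)
  constructor <;> linarith

lemma den_pos (ha : 0 < a) (han : a < n) (hbn : b < n) : 0 < 2 - (a + b) / (n : ℝ) := by
  have hn : (0 : ℝ) < n := ha.trans han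
  rw [sub_pos, div_lt_iff₀ hn]
  linarith

lemma mass_eq (ha : 0 < a) (hb : 0 < b) (hμ : IsProbVec μ) (hν : IsProbVec ν)
    (han : a < n) (hbn : b < n) (s : Bool) (x : Option L) :
    sbmPairMass n a b μ ν s x =
      erPairMass n a b μ ν x * (1 + (if s then 1 else -1) * ff n a b μ ν x) := by
  have hn : (0 : ℝ) < n := ha.trans han
  cases x with
  | none =>
    have hd := den_pos ha han hbn
    have hd' : (2 * (n : ℝ) - (a + b)) ≠ 0 := by
      have : (0 : ℝ) < 2 * (n : ℝ) - (a + b) := by linarith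
      exact this.ne'
    simp only [sbmPairMass, erPairMass, ff]
    have e : 1 - (a + b) / (2 * (n : ℝ)) = (2 - (a + b) / n) / 2 := by field_simp
    rw [e]
    set D := 2 - (a + b) / (n : ℝ) with hD
    have hDD : D / 2 * (((b - a) / n) / D) = (b - a) / n / 2 := by field_simp
    cases s
    · simp only [Bool.false_eq_true, if_false]
      have : D / 2 * (1 + -1 * ((b - a) / ↑n / D)) = D / 2 - D / 2 * (((b - a) / n) / D) := by ring
      rw [this, hDD, hD]; ring
    · simp only [if_true]
      have : D / 2 * (1 + 1 * ((b - a) / ↑n / D)) = D / 2 + D / 2 * (((b - a) / n) / D) := by ring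
      rw [this, hDD, hD]; ring
  | some ℓ =>
    rw [q_some ha hb]
    simp only [sbmPairMass, ff]
    by_cases h : a * μ ℓ + b * ν ℓ = 0
    · obtain ⟨h1, h2⟩ := den_zero ha hb hμ hν ℓ h
      rw [h, div_mul_eq_mul_div, div_mul_eq_mul_div, h1, h2]; simp
    · cases s
      · simp only [Bool.false_eq_true, if_false]; field_simp; ring
      · simp only [if_true]; field_simp; ring

lemma ff_abs (ha : 0 < a) (hb : 0 < b) (hμ : IsProbVec μ) (hν : IsProbVec ν)
    (han : a < n) (hbn : b < n) (x : Option L) : |ff n a b μ ν x| ≤ 1 := by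
  have hn : (0 : ℝ) < n := ha.trans han
  cases x with
  | none =>
    have hd := den_pos ha han hbn
    simp only [ff]
    rw [abs_div, abs_of_pos hd, div_le_one hd, abs_le]
    have h1 : a / n < 1 := (div_lt_one hn).2 han
    have h2 : b / n < 1 := (div_lt_one hn).2 hbn
    have h3 : 0 < a / n := by positivity
    have h4 : 0 < b / n := by positivity
    rw [add_div, sub_div]
    constructor <;> linarith
  | some ℓ =>
    have h1 := mul_nonneg ha.le (hμ.1 ℓ)
    have h2 := mul_nonneg hb.le (hν.1 ℓ)
    simp only [ff]
    rw [abs_div, abs_of_nonneg (add_nonneg h1 h2)]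
    refine div_le_one_of_le₀ ?_ (add_nonneg h1 h2)
    rw [abs_le]
    constructor <;> linarith

lemma qf_sum (ha : 0 < a) (hb : 0 < b) (hμ : IsProbVec μ) (hν : IsProbVec ν)
    (han : a < n) (hbn : b < n) : ∑ x, erPairMass n a b μ ν x * ff n a b μ ν x = 0 := by
  have hn : (0 : ℝ) < n := ha.trans han
  have hd := den_pos ha han hbn
  rw [Fintype.sum_option]
  have e : ∀ ℓ : L, erPairMass n a b μ ν (some ℓ) * ff n a b μ ν (some ℓ) =
      (a * μ ℓ + (-b) * ν ℓ) / (2 * n) := by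
    intro ℓ
    rw [q_some ha hb]
    simp only [ff]
    by_cases h : a * μ ℓ + b * ν ℓ = 0
    · obtain ⟨h1, h2⟩ := den_zero ha hb hμ hν ℓ h
      rw [h, neg_mul, h1, h2]; simp
    · field_simp; ring
  simp_rw [e]
  rw [sum_lin hμ hν]
  simp only [erPairMass, ff]
  have e : 1 - (a + b) / (2 * (n : ℝ)) = (2 - (a + b) / n) / 2 := by field_simp
  rw [e]
  generalize 2 - (a + b) / (n : ℝ) = D at hd ⊢
  field_simp
  ring

lemma qf2_sum (ha : 0 < a) (hb : 0 < b) (hμ : IsProbVec μ) (hν : IsProbVec ν)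
    (han : a < n) (hbn : b < n) : ∑ x, erPairMass n a b μ ν x * ff n a b μ ν x ^ 2 =
      (tau a b μ ν + (b - a) ^ 2 / (2 * (2 * n - (a + b)))) / n := by
  have hn : (0 : ℝ) < n := ha.trans han
  have hd := den_pos ha han hbn
  have hd' : (0 : ℝ) < 2 * (n : ℝ) - (a + b) := by linarith
  rw [Fintype.sum_option, add_comm, add_div]
  congr 1
  · rw [tau, Finset.sum_div]
    refine Finset.sum_congr rfl fun ℓ _ => ?_
    rw [q_some ha hb]
    simp only [ff]
    by_cases h : a * μ ℓ + b * ν ℓ = 0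
    · rw [h]; simp
    · field_simp
  · simp only [erPairMass, ff]
    have e : (2 - (a + b) / n) = (2 * n - (a + b)) / (n : ℝ) := by field_simp
    have e' : 1 - (a + b) / (2 * (n : ℝ)) = (2 * n - (a + b)) / (2 * n) := by field_simp
    rw [e, e']
    field_simp

lemma sbmMass_eq (ha : 0 < a) (hb : 0 < b) (hμ : IsProbVec μ) (hν : IsProbVec ν)
    (han : a < n) (hbn : b < n) (x : (Fin n → Bool) × EdgeConf n L) :
    sbmMass n a b μ ν x =
      (1 / 2 : ℝ) ^ n * wt (erPairMass n a b μ ν) (ff n a b μ ν) (sg x.1) x.2 := by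
  rw [sbmMass, wt]
  congr 1
  refine Finset.prod_congr rfl fun p _ => ?_
  rw [mass_eq ha hb hμ hν han hbn]
  congr 3
  unfold sg signVec
  cases x.1 p.1.1 <;> cases x.1 p.1.2 <;> simp

lemma erMass_eq (E : EdgeConf n L) :
    erMass n a b μ ν E = wt (erPairMass n a b μ ν) (ff n a b μ ν) (fun _ => 0) E := by
  simp [erMass, wt]

lemma sbmMass_nonneg (ha : 0 < a) (hb : 0 < b) (hμ : IsProbVec μ) (hν : IsProbVec ν)
    (han : a < n) (hbn : b < n) (x : (Fin n → Bool) × EdgeConf n L) :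
    0 ≤ sbmMass n a b μ ν x := by
  rw [sbmMass_eq ha hb hμ hν han hbn]
  refine mul_nonneg (by positivity) (Finset.prod_nonneg fun p _ => ?_)
  refine mul_nonneg (q_nonneg ha hb hμ hν han hbn _) ?_
  have h1 := ff_abs ha hb hμ hν han hbn (x.2 p)
  have h2 : |sg x.1 p * ff n a b μ ν (x.2 p)| ≤ 1 := by rwa [abs_mul, sg_abs, one_mul]
  linarith [(abs_le.1 h2).1]

lemma erMass_nonneg (ha : 0 < a) (hb : 0 < b) (hμ : IsProbVec μ) (hν : IsProbVec ν)
    (han : a < n) (hbn : b < n) (E : EdgeConf n L) : 0 ≤ erMass n a b μ ν E :=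
  Finset.prod_nonneg fun p _ => q_nonneg ha hb hμ hν han hbn _

lemma sbm_sum (ha : 0 < a) (hb : 0 < b) (hμ : IsProbVec μ) (hν : IsProbVec ν)
    (han : a < n) (hbn : b < n) (g : EdgeConf n L → ℝ) :
    ∑ x, sbmMass n a b μ ν x * g x.2 =
      (1 / 2 : ℝ) ^ n * ∑ σ : Fin n → Bool, ∑ E : EdgeConf n L,
        wt (erPairMass n a b μ ν) (ff n a b μ ν) (sg σ) E * g E := by
  simp_rw [sbmMass_eq ha hb hμ hν han hbn]
  rw [Fintype.sum_prod_type, Finset.mul_sum]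
  refine Finset.sum_congr rfl fun σ _ => ?_
  rw [Finset.mul_sum]
  refine Finset.sum_congr rfl fun E _ => ?_
  ring

lemma sbm_total (ha : 0 < a) (hb : 0 < b) (hμ : IsProbVec μ) (hν : IsProbVec ν)
    (han : a < n) (hbn : b < n) : ∑ x : (Fin n → Bool) × EdgeConf n L, sbmMass n a b μ ν x = 1 := by
  have := sbm_sum ha hb hμ hν han hbn (fun _ => 1)
  simp only [mul_one] at this
  rw [this]
  simp_rw [wt_total _ _ _ (q_sum ha hb hμ hν) (qf_sum ha hb hμ hν han hbn)]
  exact half_pow_card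

lemma sbm_compl (ha : 0 < a) (hb : 0 < b) (hμ : IsProbVec μ) (hν : IsProbVec ν)
    (han : a < n) (hbn : b < n) (A : Set (EdgeConf n L)) :
    1 - sbmGraphProb n a b μ ν A =
      ∑ x, ({x | x.2 ∈ A}ᶜ : Set ((Fin n → Bool) × EdgeConf n L)).indicator (sbmMass n a b μ ν) x := by
  rw [← sbm_total ha hb hμ hν han hbn, sbmGraphProb, sbmProb, ← Finset.sum_sub_distrib]
  refine Finset.sum_congr rfl fun x _ => ?_
  rw [Set.indicator_compl]; simp

lemma sbm_le_one (ha : 0 < a) (hb : 0 < b) (hμ : IsProbVec μ) (hν : IsProbVec ν)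
    (han : a < n) (hbn : b < n) (A : Set (EdgeConf n L)) :
    0 ≤ 1 - sbmGraphProb n a b μ ν A := by
  rw [sbm_compl ha hb hμ hν han hbn]
  exact Finset.sum_nonneg fun x _ =>
    Set.indicator_nonneg (fun x _ => sbmMass_nonneg ha hb hμ hν han hbn x) x

lemma er_nonneg (ha : 0 < a) (hb : 0 < b) (hμ : IsProbVec μ) (hν : IsProbVec ν)
    (han : a < n) (hbn : b < n) (A : Set (EdgeConf n L)) :
    0 ≤ erProb n a b μ ν A :=
  Finset.sum_nonneg fun x _ =>
    Set.indicator_nonneg (fun x _ => erMass_nonneg ha hb hμ hν han hbn x) x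

lemma card_cyc_lower {n m : ℕ} (hn : 2 * (m + 3) ^ 2 ≤ n) :
    (n : ℝ) ^ (m + 3) / 2 ≤ Fintype.card (Cyc m n) := by
  rw [Fintype.card_embedding_eq, Fintype.card_fin, ZMod.card]
  have h := Nat.pow_sub_le_descFactorial n (m + 3)
  have hk : m + 3 ≤ n := by nlinarith
  have hn0 : 0 < n := by omega
  have hn' : (0 : ℝ) < n := by exact_mod_cast hn0
  have h' : ((n : ℝ) - (m + 3 : ℕ)) ^ (m + 3) ≤ (n.descFactorial (m + 3) : ℝ) := by
    refine le_trans ?_ (Nat.cast_le.2 h)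
    rw [Nat.cast_pow]
    refine pow_le_pow_left₀ ?_ ?_ _
    · rw [sub_nonneg]; exact_mod_cast hk
    · rw [← Nat.cast_sub hk]; exact_mod_cast (by omega)
  refine le_trans ?_ h'
  have e : (n : ℝ) - (m + 3 : ℕ) = n * (1 + -((m + 3 : ℕ) / (n : ℝ))) := by field_simp; ring
  rw [e, mul_pow, div_eq_mul_one_div]
  refine mul_le_mul_of_nonneg_left ?_ (by positivity)
  have hkn : ((m + 3 : ℕ) : ℝ) / n ≤ 1 := by
    rw [div_le_one hn']; exact_mod_cast hk
  have hb := one_add_mul_le_pow (a := -(((m + 3 : ℕ) : ℝ) / n)) (by linarith) (m + 3)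
  refine le_trans ?_ hb
  have h2 : ((m + 3 : ℕ) : ℝ) * (((m + 3 : ℕ) : ℝ) / n) ≤ 1 / 2 := by
    rw [← mul_div_assoc, div_le_iff₀ hn']
    have : (2 : ℝ) * ((m + 3 : ℕ) : ℝ) ^ 2 ≤ n := by exact_mod_cast hn
    nlinarith
  linarith

lemma good_event (ha : 0 < a) (hb : 0 < b) (hμ : IsProbVec μ) (hν : IsProbVec ν)
    (htau : 1 < tau a b μ ν) (ε : ℝ) (hε : 0 < ε) :
    ∀ᶠ n : ℕ in atTop, ∃ A : Set (EdgeConf n L),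
      erProb n a b μ ν A ≤ ε ∧ 1 - sbmGraphProb n a b μ ν A ≤ ε := by
  set τ := tau a b μ ν with hτ
  obtain ⟨m, hm⟩ : ∃ m : ℕ, 16 * (((m + 3 : ℕ) : ℝ) ^ 2 / τ ^ (m + 3)) < ε / 2 := by
    have h := tendsto_pow_const_div_const_pow_of_one_lt 2 htau
    have h' := (tendsto_add_atTop_iff_nat 3).2 h
    have h'' := h'.const_mul 16
    rw [mul_zero] at h''
    exact (h''.eventually (gt_mem_nhds (half_pos hε))).exists
  set B := τ + 1 with hB
  set K : ℝ := 2 ^ (m + 3) * B ^ (2 * (m + 3) + 1) *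
        (((2 * (m + 3) : ℕ) + 1) * ((2 * (m + 3) : ℕ) : ℝ) ^ (2 * (m + 3))) with hK
  have hK0 : 0 < K := by positivity
  have ev : ∀ x : ℝ, ∀ᶠ n : ℕ in atTop, x < n := fun x =>
    tendsto_natCast_atTop_atTop.eventually_gt_atTop x
  filter_upwards [ev a, ev b, ev (16 * K / (ε / 2)), ev ((a + b) + (b - a) ^ 2),
    eventually_ge_atTop (2 * (m + 3) ^ 2)] with n han hbn hKn hdn hcn
  have hn' : (0 : ℝ) < n := ha.trans han
  have hn0 : 0 < n := by exact_mod_cast hn'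
  set q := erPairMass n a b μ ν with hq
  set f := ff n a b μ ν with hf
  have h1 := q_sum (n := n) ha hb hμ hν
  have h0 := qf_sum ha hb hμ hν han hbn
  have ht := qf2_sum ha hb hμ hν han hbn
  have hd' : (0 : ℝ) < 2 * (n : ℝ) - (a + b) := by linarith
  rw [← hq, ← hf, ← hτ] at ht
  rw [← hq, ← hf] at h0
  rw [← hq] at h1
  have htB : ∑ x, q x * f x ^ 2 ≤ B / n := by
    rw [ht]
    refine div_le_div_of_nonneg_right ?_ hn'.le
    have : (b - a) ^ 2 / (2 * (2 * n - (a + b))) ≤ 1 := by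
      rw [div_le_one (by positivity)]
      linarith
    linarith
  have htl : τ / n ≤ ∑ x, q x * f x ^ 2 := by
    rw [ht]
    refine div_le_div_of_nonneg_right ?_ hn'.le
    have : 0 ≤ (b - a) ^ 2 / (2 * (2 * n - (a + b))) := by positivity
    linarith
  have ht0 : 0 ≤ ∑ x, q x * f x ^ 2 := le_trans (by positivity) htl
  obtain ⟨M, hM⟩ : ∃ M : ℝ, M = Fintype.card (Cyc m n) * (∑ x, q x * f x ^ 2) ^ (m + 3) :=
    ⟨_, rfl⟩
  have hMl : τ ^ (m + 3) / 2 ≤ M := by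
    rw [hM]
    calc τ ^ (m + 3) / 2 = (n : ℝ) ^ (m + 3) / 2 * (τ / n) ^ (m + 3) := by
          rw [div_pow]; field_simp
      _ ≤ _ := mul_le_mul (card_cyc_lower hcn) (pow_le_pow_left₀ (by positivity) htl _)
          (by positivity) (by positivity)
  have hτk : 1 ≤ τ ^ (m + 3) := one_le_pow₀ htau.le
  have hM0 : 0 < M := by linarith
  have er := er_T2 (n := n) (m := m) q f h1 h0 ht0
  rw [← hM] at er
  have sb := sbm_var (n := n) (m := m) q f h1 h0 (q_nonneg ha hb hμ hν han hbn)
    (ff_abs ha hb hμ hν han hbn) B (by linarith) hn0 htB M hM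
  rw [← hK, ← sbm_sum ha hb hμ hν han hbn (fun E => (Tst m f E - M) ^ 2)] at sb
  have hinv : 1 / M ≤ 2 / τ ^ (m + 3) := by
    rw [div_le_div_iff₀ hM0 (by positivity)]; linarith
  have hinv1 : 1 / M ≤ 2 := by
    refine hinv.trans ?_
    rw [div_le_iff₀ (by positivity)]; linarith
  have hKn' : 16 * K * (1 / n) < ε / 2 := by
    rw [div_lt_iff₀ (by positivity)] at hKn
    rw [mul_one_div, div_lt_iff₀ hn']
    linarith
  have hk2 : 0 ≤ ((m + 3 : ℕ) : ℝ) ^ 2 := by positivity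
  have hkM : ((m + 3 : ℕ) : ℝ) ^ 2 * (1 / M) ≤ ((m + 3 : ℕ) : ℝ) ^ 2 * (2 / τ ^ (m + 3)) :=
    mul_le_mul_of_nonneg_left hinv hk2
  have hkM' : ((m + 3 : ℕ) : ℝ) ^ 2 * (2 / τ ^ (m + 3)) = 2 * (((m + 3 : ℕ) : ℝ) ^ 2 / τ ^ (m + 3)) := by
    ring
  have hpos : 0 ≤ ((m + 3 : ℕ) : ℝ) ^ 2 / τ ^ (m + 3) := by positivity
  refine ⟨{E | M / 2 ≤ Tst m f E}, ?_, ?_⟩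
  · have hc := chebyshev (erMass n a b μ ν) (Tst m f) (erMass_nonneg ha hb hμ hν han hbn) 0 (M / 2)
      (by positivity) {E | M / 2 ≤ Tst m f E} (by
        intro E hE
        rw [sub_zero]
        exact le_trans hE (le_abs_self _))
    simp only [sub_zero] at hc
    have er' : ∑ E, erMass n a b μ ν E * Tst m f E ^ 2 ≤ ((m + 3 : ℕ) : ℝ) ^ 2 * M := by
      simp_rw [erMass_eq]; exact er
    refine hc.trans ?_
    refine (div_le_div_of_nonneg_right er' (by positivity)).trans ?_
    have : ((m + 3 : ℕ) : ℝ) ^ 2 * M / (M / 2) ^ 2 = 4 * (((m + 3 : ℕ) : ℝ) ^ 2 * (1 / M)) := by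
      field_simp; norm_num
    rw [this]
    linarith
  · rw [sbm_compl ha hb hμ hν han hbn]
    have hc := chebyshev (sbmMass n a b μ ν) (fun x => Tst m f x.2)
      (sbmMass_nonneg ha hb hμ hν han hbn) M (M / 2) (by positivity)
      ({x | x.2 ∈ {E | M / 2 ≤ Tst m f E}}ᶜ) (by
        intro x hx
        have hx' : Tst m f x.2 < M / 2 := not_le.1 hx
        rw [abs_sub_comm]
        refine le_trans ?_ (le_abs_self _)
        linarith)
    refine hc.trans ?_
    refine (div_le_div_of_nonneg_right sb (by positivity)).trans ?_
    have : (2 * ((m + 3 : ℕ) : ℝ) ^ 2 * M + K * (1 / n)) / (M / 2) ^ 2 =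
        8 * (((m + 3 : ℕ) : ℝ) ^ 2 * (1 / M)) + 4 * (K * (1 / n)) * ((1 / M) * (1 / M)) := by
      field_simp; ring
    rw [this]
    have hMM : (1 / M) * (1 / M) ≤ 2 * 2 :=
      mul_le_mul hinv1 hinv1 (by positivity) (by norm_num)
    have := mul_le_mul_of_nonneg_left hMM (by positivity : 0 ≤ 4 * (K * (1 / (n : ℝ))))
    linarith

end concrete

/-- **Theorem (Orthogonality, Theorem 6, first part).**
If `τ > 1`, then the labeled SBM distribution `ℙ_n` and the labeled Erdős–Rényi
distribution `ℙ'_n` are asymptotically orthogonal: there are events `A_n` with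
`ℙ_n(A_n) → 1` and `ℙ'_n(A_n) → 0`. -/
theorem sbm_er_orthogonal
    {L : Type*} [Fintype L] (a b : ℝ) (ha : 0 < a) (hb : 0 < b)
    (μ ν : L → ℝ) (hμ : IsProbVec μ) (hν : IsProbVec ν)
    (htau : 1 < tau a b μ ν) :
    ∃ A : (n : ℕ) → Set (EdgeConf n L),
      Filter.Tendsto (fun n : ℕ => sbmGraphProb n a b μ ν (A n))
        Filter.atTop (nhds 1) ∧
      Filter.Tendsto (fun n : ℕ => erProb n a b μ ν (A n))
        Filter.atTop (nhds 0) := by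
  classical
  have hmin : ∀ n : ℕ, ∃ A : Set (EdgeConf n L), ∀ A' : Set (EdgeConf n L),
      erProb n a b μ ν A + (1 - sbmGraphProb n a b μ ν A) ≤
        erProb n a b μ ν A' + (1 - sbmGraphProb n a b μ ν A') := fun n =>
    Finite.exists_min fun A : Set (EdgeConf n L) =>
      erProb n a b μ ν A + (1 - sbmGraphProb n a b μ ν A)
  choose A hA using hmin
  have ev : ∀ x : ℝ, ∀ᶠ n : ℕ in atTop, x < n := fun x =>
    tendsto_natCast_atTop_atTop.eventually_gt_atTop x
  refine ⟨A, ?_, ?_⟩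
  · rw [Metric.tendsto_nhds]
    intro ε hε
    filter_upwards [good_event ha hb hμ hν htau (ε / 3) (by positivity), ev a, ev b]
      with n ⟨A', h1, h2⟩ han hbn
    have h3 := hA n A'
    have h4 := er_nonneg ha hb hμ hν han hbn (A n)
    have h5 := sbm_le_one ha hb hμ hν han hbn (A n)
    rw [Real.dist_eq, abs_sub_comm, abs_of_nonneg h5]
    linarith
  · rw [Metric.tendsto_nhds]
    intro ε hε
    filter_upwards [good_event ha hb hμ hν htau (ε / 3) (by positivity), ev a, ev b]
      with n ⟨A', h1, h2⟩ han hbn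
    have h3 := hA n A'
    have h4 := er_nonneg ha hb hμ hν han hbn (A n)
    have h5 := sbm_le_one ha hb hμ hν han hbn (A n)
    rw [Real.dist_eq, sub_zero, abs_of_nonneg h4]
    linarith

end LSBM
end

section
/- Let ℙ'_n denote the distribution of the labeled Erdős–Rényi graph 𝒢(n, (a+b)/2). For any fixed integer m ≥ 3, under ℙ'_n the family of random variables {X_n([ℓ]_k) : [ℓ]_k ∈ 𝓛^k, 3 ≤ k ≤ m} converges jointly in distribution, as n → ∞, to a family of independent Poisson random variables, where the limit variable corresponding to [ℓ]_k = (ℓ₁,…,ℓ_k) has mean λ([ℓ]_k) = (1/(2^{k+1}·k))·∏_{i=1}^k (a·μ(ℓ_i) + b·ν(ℓ_i)). -/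
open Finset Filter Real

namespace LSBM

variable {L : Type*}

section AbstractPart

variable {Ω A T : Type*} [Fintype Ω] [Fintype A] [Fintype T] [DecidableEq T]

def cntX (τ : A → T) (I : A → Ω → ℕ) (ω : Ω) (t : T) : ℕ :=
  ∑ α, if τ α = t then I α ω else 0

open Classical in
theorem stein_bound (w : Ω → ℝ) (hw : ∀ ω, 0 ≤ w ω) (hw1 : ∑ ω, w ω = 1)
    (I : A → Ω → ℕ) (h01 : ∀ α ω, I α ω = 0 ∨ I α ω = 1) (τ : A → T)
    (D : A → A → Prop) (hD : ∀ α, D α α) (p : A → ℝ)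
    (hind : ∀ α (G : Ω → ℝ), (∀ x y, (∀ β, ¬ D α β → I β x = I β y) → G x = G y) →
      ∑ ω, w ω * ((I α ω : ℝ) * G ω) = p α * ∑ ω, w ω * G ω)
    (Bd : A → A → ℝ) (hb1 : ∀ α β, D α β → p α * p β ≤ Bd α β)
    (hb2 : ∀ α β, D α β → α ≠ β → ∑ ω, w ω * ((I α ω : ℝ) * I β ω) ≤ Bd α β)
    (h : (T → ℕ) → ℝ) (hh : ∀ x, |h x| ≤ 1) (t : T) :
    |∑ ω, w ω * ((cntX τ I ω t : ℝ) * h (cntX τ I ω)) -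
      (∑ α, if τ α = t then p α else 0) * ∑ ω, w ω * h (cntX τ I ω + Pi.single t 1)| ≤
      4 * ∑ α, ∑ β, if D α β then Bd α β else 0 := by
  have hp : ∀ α, p α = ∑ ω, w ω * (I α ω : ℝ) := by
    intro α
    have := hind α (fun _ => 1) (by intros; rfl)
    simpa [hw1] using this.symm
  have hp0 : ∀ α, 0 ≤ p α := by
    intro α; rw [hp]; exact Finset.sum_nonneg (fun ω _ => mul_nonneg (hw ω) (Nat.cast_nonneg _))
  have hBd0 : ∀ α β, 0 ≤ (if D α β then Bd α β else 0) := by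
    intro α β; split_ifs with hd
    · exact (mul_nonneg (hp0 α) (hp0 β)).trans (hb1 α β hd)
    · exact le_rfl
  have hdiff : ∀ x y, |h x - h y| ≤ 2 := by
    intro x y
    have h1 := abs_le.1 (hh x); have h2 := abs_le.1 (hh y)
    rw [abs_le]; constructor <;> linarith
  -- the reduced counts
  let Y : A → Ω → (T → ℕ) := fun α ω s => ∑ β, if τ β = s ∧ ¬ D α β then I β ω else 0
  have key : ∀ α, τ α = t →
      |∑ ω, w ω * ((I α ω : ℝ) * h (cntX τ I ω)) -
        p α * ∑ ω, w ω * h (cntX τ I ω + Pi.single t 1)| ≤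
      4 * ∑ β, if D α β then Bd α β else 0 := by
    intro α hα
    have hY := hind α (fun ω => h (Y α ω + Pi.single t 1)) (by
      intro x y hxy
      have : Y α x = Y α y := by
        funext s
        apply Finset.sum_congr rfl
        intro β _
        by_cases hc : τ β = s ∧ ¬ D α β
        · simp only [if_pos hc]; exact hxy β hc.2
        · simp only [if_neg hc]
      simp only [this])
    -- first difference
    have d1 : |∑ ω, w ω * ((I α ω : ℝ) * h (cntX τ I ω)) -
        ∑ ω, w ω * ((I α ω : ℝ) * h (Y α ω + Pi.single t 1))| ≤
        2 * ∑ β, if D α β then Bd α β else 0 := by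
      have pt : ∀ ω, |w ω * ((I α ω : ℝ) * h (cntX τ I ω)) -
          w ω * ((I α ω : ℝ) * h (Y α ω + Pi.single t 1))| ≤
          ∑ β, if D α β ∧ α ≠ β then 2 * (w ω * ((I α ω : ℝ) * I β ω)) else 0 := by
        intro ω
        have hnn : ∀ β ∈ (Finset.univ : Finset A),
            0 ≤ if D α β ∧ α ≠ β then 2 * (w ω * ((I α ω : ℝ) * I β ω)) else 0 := by
          intro β _
          split_ifs
          · have := hw ω; positivity
          · exact le_rfl
        rcases h01 α ω with h0 | h1
        · simp [h0]
        · by_cases hex : ∃ β, (D α β ∧ α ≠ β) ∧ I β ω = 1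
          · obtain ⟨β, hβ, hβ1⟩ := hex
            refine le_trans ?_ (Finset.single_le_sum hnn (Finset.mem_univ β))
            rw [if_pos hβ, h1, hβ1, ← mul_sub, abs_mul, abs_of_nonneg (hw ω)]
            have := hdiff (cntX τ I ω) (Y α ω + Pi.single t 1)
            have := mul_le_mul_of_nonneg_left this (hw ω)
            simpa [mul_comm] using this
          · have hXY : cntX τ I ω = Y α ω + Pi.single t 1 := by
              funext s
              have : (Pi.single t 1 : T → ℕ) s = ∑ β, if β = α then (if t = s then 1 else 0) else 0 := by
                rw [Finset.sum_ite_eq']; simp [Pi.single_apply, eq_comm]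
              rw [Pi.add_apply, this]
              simp only [cntX, Y]
              rw [← Finset.sum_add_distrib]
              apply Finset.sum_congr rfl
              intro β _
              by_cases hβ : β = α
              · subst hβ
                simp [hD, h1, hα]
              · by_cases hd : D α β
                · have : I β ω = 0 := by
                    rcases h01 β ω with h | h
                    · exact h
                    · exact absurd ⟨β, ⟨hd, Ne.symm hβ⟩, h⟩ hex
                  simp [hβ, this]
                · simp [hβ, hd]
            rw [← hXY, sub_self, abs_zero]
            exact Finset.sum_nonneg hnn
      rw [← Finset.sum_sub_distrib]
      refine (Finset.abs_sum_le_sum_abs _ _).trans ((Finset.sum_le_sum fun ω _ => pt ω).trans ?_)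
      rw [Finset.sum_comm, Finset.mul_sum]
      apply Finset.sum_le_sum
      intro β _
      by_cases hc : D α β ∧ α ≠ β
      · simp only [if_pos hc, if_pos hc.1]
        rw [← Finset.mul_sum]
        have := hb2 α β hc.1 hc.2
        linarith
      · simp only [if_neg hc, Finset.sum_const_zero]
        have := hBd0 α β
        linarith
    have d2 : |p α * ∑ ω, w ω * h (Y α ω + Pi.single t 1) -
        p α * ∑ ω, w ω * h (cntX τ I ω + Pi.single t 1)| ≤
        2 * ∑ β, if D α β then Bd α β else 0 := by
      have pt : ∀ ω, |w ω * h (Y α ω + Pi.single t 1) -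
          w ω * h (cntX τ I ω + Pi.single t 1)| ≤
          ∑ β, if D α β then 2 * (w ω * (I β ω : ℝ)) else 0 := by
        intro ω
        have hnn : ∀ β ∈ (Finset.univ : Finset A),
            0 ≤ if D α β then 2 * (w ω * (I β ω : ℝ)) else 0 := by
          intro β _
          split_ifs
          · have := hw ω; positivity
          · exact le_rfl
        by_cases hex : ∃ β, D α β ∧ I β ω = 1
        · obtain ⟨β, hβ, hβ1⟩ := hex
          refine le_trans ?_ (Finset.single_le_sum hnn (Finset.mem_univ β))
          rw [if_pos hβ, hβ1, ← mul_sub, abs_mul, abs_of_nonneg (hw ω)]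
          have := hdiff (Y α ω + Pi.single t 1) (cntX τ I ω + Pi.single t 1)
          have := mul_le_mul_of_nonneg_left this (hw ω)
          simpa [mul_comm] using this
        · have hXY : cntX τ I ω = Y α ω := by
            funext s
            apply Finset.sum_congr rfl
            intro β _
            by_cases hd : D α β
            · have : I β ω = 0 := by
                rcases h01 β ω with h | h
                · exact h
                · exact absurd ⟨β, hd, h⟩ hex
              simp [this]
            · simp [hd]
          rw [← hXY, sub_self, abs_zero]
          exact Finset.sum_nonneg hnn
      rw [← mul_sub, abs_mul, abs_of_nonneg (hp0 α), ← Finset.sum_sub_distrib]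
      refine (mul_le_mul_of_nonneg_left ((Finset.abs_sum_le_sum_abs _ _).trans
        (Finset.sum_le_sum fun ω _ => pt ω)) (hp0 α)).trans ?_
      rw [Finset.sum_comm, Finset.mul_sum, Finset.mul_sum]
      apply Finset.sum_le_sum
      intro β _
      by_cases hc : D α β
      · simp only [if_pos hc]
        rw [← Finset.mul_sum, ← hp]
        have := hb1 α β hc
        linarith
      · simp [if_neg hc]
    rw [hY] at d1
    have := abs_sub_le (∑ ω, w ω * ((I α ω : ℝ) * h (cntX τ I ω)))
      (p α * ∑ ω, w ω * h (Y α ω + Pi.single t 1))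
      (p α * ∑ ω, w ω * h (cntX τ I ω + Pi.single t 1))
    linarith
  have e1 : ∑ ω, w ω * ((cntX τ I ω t : ℝ) * h (cntX τ I ω)) =
      ∑ α, if τ α = t then ∑ ω, w ω * ((I α ω : ℝ) * h (cntX τ I ω)) else 0 := by
    have : ∀ α, (if τ α = t then ∑ ω, w ω * ((I α ω : ℝ) * h (cntX τ I ω)) else 0) =
        ∑ ω, if τ α = t then w ω * ((I α ω : ℝ) * h (cntX τ I ω)) else 0 := by
      intro α; split_ifs <;> simp
    simp only [this]
    rw [Finset.sum_comm]
    apply Finset.sum_congr rfl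
    intro ω _
    have : (cntX τ I ω t : ℝ) = ∑ α, if τ α = t then (I α ω : ℝ) else 0 := by
      simp [cntX]
    rw [this, Finset.sum_mul, Finset.mul_sum]
    apply Finset.sum_congr rfl
    intro α _
    split_ifs <;> simp
  rw [e1, Finset.sum_mul, ← Finset.sum_sub_distrib, Finset.mul_sum]
  refine (Finset.abs_sum_le_sum_abs _ _).trans (Finset.sum_le_sum fun α _ => ?_)
  by_cases hα : τ α = t
  · simp only [if_pos hα]; exact key α hα
  · simp only [if_neg hα]
    have : 0 ≤ ∑ β, if D α β then Bd α β else 0 := Finset.sum_nonneg fun β _ => hBd0 α β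
    simpa using this


theorem zero_prob (w : Ω → ℝ) (hw1 : ∑ ω, w ω = 1)
    (X : Ω → T → ℕ) (lam : T → ℝ) (hlam : ∀ t, 0 ≤ lam t) (ε : ℝ)
    (hS : ∀ (h : (T → ℕ) → ℝ), (∀ x, |h x| ≤ 1) → ∀ t,
      |∑ ω, w ω * ((X ω t : ℝ) * h (X ω)) -
        lam t * ∑ ω, w ω * h (X ω + Pi.single t 1)| ≤ ε) :
    |(∑ ω, w ω * (if X ω = 0 then 1 else 0)) - Real.exp (-∑ t, lam t)| ≤
      Fintype.card T * ε := by
  set Λ := ∑ t, lam t with hΛ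
  have hΛ0 : 0 ≤ Λ := Finset.sum_nonneg fun t _ => hlam t
  let N : Ω → ℕ := fun ω => ∑ t, X ω t
  let f : ℝ → ℝ := fun s => ∑ ω, w ω * (1 - s) ^ N ω
  let f' : ℝ → ℝ := fun s => ∑ ω, w ω * (-(N ω * (1 - s) ^ (N ω - 1)))
  have hf : ∀ s, HasDerivAt f (f' s) s := by
    intro s
    apply HasDerivAt.fun_sum
    intro ω _
    apply HasDerivAt.const_mul
    have := ((hasDerivAt_id s).const_sub 1).fun_pow (N ω)
    refine HasDerivAt.congr_deriv (f := fun s : ℝ => (1 - s) ^ N ω) this ?_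
    change (N ω : ℝ) * (1 - s) ^ (N ω - 1) * -1 = _
    ring
  have hbd : ∀ s ∈ Set.Icc (0:ℝ) 1, |f' s + Λ * f s| ≤ Fintype.card T * ε := by
    intro s hs
    have hh : ∀ x : T → ℕ, |(1 - s) ^ (∑ t, x t - 1)| ≤ 1 := by
      intro x
      rw [abs_pow]
      apply pow_le_one₀ (abs_nonneg _)
      rw [abs_le]; constructor <;> linarith [hs.1, hs.2]
    have := fun t => hS (fun x => (1 - s) ^ (∑ t, x t - 1)) hh t
    have e : f' s + Λ * f s = -∑ t, (∑ ω, w ω * ((X ω t : ℝ) * (1 - s) ^ (∑ t, X ω t - 1)) -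
        lam t * ∑ ω, w ω * (1 - s) ^ (∑ t', (X ω + Pi.single t 1 : T → ℕ) t' - 1)) := by
      rw [Finset.sum_sub_distrib]
      have h1 : ∀ t ω, ∑ t', (X ω + Pi.single t 1 : T → ℕ) t' - 1 = N ω := by
        intro t ω
        simp [Finset.sum_add_distrib, N]
      simp only [h1]
      rw [← Finset.sum_mul, Finset.sum_comm]
      have h2 : ∑ ω, ∑ t, w ω * ((X ω t : ℝ) * (1 - s) ^ (∑ t, X ω t - 1)) = - f' s := by
        simp only [f']
        rw [← Finset.sum_neg_distrib]
        apply Finset.sum_congr rfl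
        intro ω _
        rw [← Finset.mul_sum, ← Finset.sum_mul]
        simp [N]
      rw [h2]
      ring
    rw [e, abs_neg]
    refine (Finset.abs_sum_le_sum_abs _ _).trans ((Finset.sum_le_sum fun t _ => this t).trans ?_)
    simp
  let g : ℝ → ℝ := fun s => Real.exp (Λ * s) * f s
  have hg : ∀ s, HasDerivAt g (Real.exp (Λ * s) * (f' s + Λ * f s)) s := by
    intro s
    have h1 : HasDerivAt (fun s => Real.exp (Λ * s)) (Real.exp (Λ * s) * Λ) s := by
      have := ((hasDerivAt_id s).const_mul Λ).exp
      simpa using this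
    have := h1.fun_mul (hf s)
    refine HasDerivAt.congr_deriv (f := g) this ?_
    ring
  have mv := (convex_Icc (0:ℝ) 1).norm_image_sub_le_of_norm_hasDerivWithin_le
    (f := g) (C := Real.exp Λ * (Fintype.card T * ε)) (x := 0) (y := 1)
    (fun s _ => (hg s).hasDerivWithinAt) (by
      intro s hs
      rw [norm_mul, Real.norm_eq_abs, Real.norm_eq_abs, abs_of_pos (Real.exp_pos _)]
      apply mul_le_mul _ (hbd s hs) (abs_nonneg _) (Real.exp_pos _).le
      apply Real.exp_le_exp.2
      nlinarith [hs.1, hs.2]) (by simp) (by simp)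
  have g0 : g 0 = 1 := by simp [g, f, hw1]
  have g1 : g 1 = Real.exp Λ * ∑ ω, w ω * (if X ω = 0 then 1 else 0) := by
    simp only [g, f, mul_one, sub_self]
    congr 1
    apply Finset.sum_congr rfl
    intro ω _
    congr 1
    rw [zero_pow_eq]
    have : N ω = 0 ↔ X ω = 0 := by
      simp [N, Finset.sum_eq_zero_iff, funext_iff]
    simp [this]
  rw [g0, g1] at mv
  simp only [sub_zero, norm_one, mul_one, Real.norm_eq_abs] at mv
  have e2 : Real.exp Λ * ∑ ω, w ω * (if X ω = 0 then 1 else 0) - 1 =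
      Real.exp Λ * ((∑ ω, w ω * (if X ω = 0 then 1 else 0)) - Real.exp (-Λ)) := by
    rw [mul_sub, ← Real.exp_add]; simp
  rw [e2, abs_mul, abs_of_pos (Real.exp_pos _)] at mv
  exact le_of_mul_le_mul_left mv (Real.exp_pos _)

end AbstractPart

/-- Abstract Poisson limit. -/
theorem poisson_limit {T : Type*} [Fintype T] [DecidableEq T]
    (Ω : ℕ → Type*) [∀ n, Fintype (Ω n)] (w : ∀ n, Ω n → ℝ)
    (X : ∀ n, Ω n → T → ℕ) (lamn : ℕ → T → ℝ) (lam : T → ℝ) (ε : ℕ → ℝ)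
    (hε : Tendsto ε atTop (nhds 0))
    (hlam : ∀ t, Tendsto (fun n => lamn n t) atTop (nhds (lam t)))
    (hw1 : ∀ᶠ n in atTop, ∑ ω, w n ω = 1)
    (hl0 : ∀ᶠ n in atTop, ∀ t, 0 ≤ lamn n t)
    (hS : ∀ᶠ n in atTop, ∀ (h : (T → ℕ) → ℝ), (∀ x, |h x| ≤ 1) → ∀ t,
      |∑ ω, w n ω * ((X n ω t : ℝ) * h (X n ω)) -
        lamn n t * ∑ ω, w n ω * h (X n ω + Pi.single t 1)| ≤ ε n)
    (j : T → ℕ) :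
    Tendsto (fun n => ∑ ω, w n ω * (if X n ω = j then 1 else 0)) atTop
      (nhds (∏ t, poissonPMF (lam t) (j t))) := by
  induction hN : ∑ t, j t generalizing j with
  | zero =>
    have hj : j = 0 := by
      funext t
      simpa using (Finset.sum_eq_zero_iff.1 hN) t (Finset.mem_univ t)
    subst hj
    have e : ∏ t, poissonPMF (lam t) ((0 : T → ℕ) t) = Real.exp (-∑ t, lam t) := by
      simp [poissonPMF, ← Real.exp_sum]
    rw [e]
    have h1 : Tendsto (fun n => Real.exp (-∑ t, lamn n t)) atTop
        (nhds (Real.exp (-∑ t, lam t))) :=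
      (Real.continuous_exp.tendsto _).comp (tendsto_finsetSum _ fun t _ => hlam t).neg
    have h2 : Tendsto (fun n => (Fintype.card T : ℝ) * ε n) atTop (nhds 0) := by
      simpa using hε.const_mul (Fintype.card T : ℝ)
    have h3 : Tendsto (fun n => (∑ ω, w n ω * (if X n ω = 0 then 1 else 0)) -
        Real.exp (-∑ t, lamn n t)) atTop (nhds 0) := by
      apply squeeze_zero_norm' _ h2
      filter_upwards [hw1, hl0, hS] with n h1 h2 h3
      exact zero_prob (w n) h1 (X n) (lamn n) h2 (ε n) h3
    simpa using h3.add h1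
  | succ N ih =>
    obtain ⟨t, ht⟩ : ∃ t, j t ≠ 0 := by
      by_contra hcon
      push Not at hcon
      simp [hcon] at hN
    let i : T → ℕ := Function.update j t (j t - 1)
    have hji : j = i + Pi.single t 1 := by
      funext s
      by_cases hs : s = t
      · subst hs; simp [i]; omega
      · simp [i, hs]
    have hi : ∑ t, i t = N := by
      rw [hji] at hN
      simpa [Finset.sum_add_distrib] using hN
    have IH := ih i hi
    have hjt : (j t : ℝ) ≠ 0 := by exact_mod_cast ht
    have e : ∏ s, poissonPMF (lam s) (j s) =
        (lam t * ∏ s, poissonPMF (lam s) (i s)) / j t := by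
      rw [← Finset.mul_prod_erase _ _ (Finset.mem_univ t),
        ← Finset.mul_prod_erase _ (fun s => poissonPMF (lam s) (i s)) (Finset.mem_univ t)]
      have e1 : ∏ s ∈ Finset.univ.erase t, poissonPMF (lam s) (j s) =
          ∏ s ∈ Finset.univ.erase t, poissonPMF (lam s) (i s) := by
        apply Finset.prod_congr rfl
        intro s hs
        simp [i, Finset.ne_of_mem_erase hs]
      rw [e1]
      have e2 : poissonPMF (lam t) (j t) = lam t * poissonPMF (lam t) (i t) / j t := by
        obtain ⟨q, hq⟩ := Nat.exists_eq_succ_of_ne_zero ht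
        have hq' : i t = q := by simp [i, hq]
        rw [hq', hq]
        have : (Nat.factorial q : ℝ) ≠ 0 := by positivity
        have : ((q : ℝ) + 1) ≠ 0 := by positivity
        simp only [poissonPMF, Nat.succ_eq_add_one, Nat.factorial_succ]
        push_cast
        field_simp
        ring
      rw [e2]; ring
    rw [e]
    have h3 : Tendsto (fun n => (j t : ℝ) * (∑ ω, w n ω * (if X n ω = j then 1 else 0)) -
        lamn n t * (∑ ω, w n ω * (if X n ω = i then 1 else 0))) atTop (nhds 0) := by
      apply squeeze_zero_norm' _ hε
      filter_upwards [hS] with n h3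
      have := h3 (fun x => if x = j then 1 else 0) (by intro x; split_ifs <;> simp) t
      rw [Real.norm_eq_abs]
      convert this using 3
      · rw [Finset.mul_sum]
        apply Finset.sum_congr rfl
        intro ω _
        split_ifs with hx
        · rw [hx]; ring
        · simp
      · congr 1
        apply Finset.sum_congr rfl
        intro ω _
        congr 1
        rw [hji]
        simp
    have h4 := (h3.add ((hlam t).mul IH)).div_const (j t : ℝ)
    simp only [zero_add] at h4
    refine h4.congr fun n => ?_
    field_simp
    ring

section ProductPart

theorem indep_single {P O : Type*} [Fintype P] [DecidableEq P] [Fintype O] [DecidableEq O]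
    (q : O → ℝ) (hq : ∑ o, q o = 1) (p : P) (o : O) (G : (P → O) → ℝ)
    (hG : ∀ x y, (∀ r, r ≠ p → x r = y r) → G x = G y) :
    ∑ x : P → O, (∏ r, q (x r)) * ((if x p = o then 1 else 0) * G x) =
      q o * ∑ x : P → O, (∏ r, q (x r)) * G x := by
  let e := Equiv.funSplitAt p O
  rw [← e.symm.sum_comp, ← e.symm.sum_comp, Fintype.sum_prod_type, Fintype.sum_prod_type]
  have h1 : ∀ (o' : O) (z : {j // j ≠ p} → O), (e.symm (o', z)) p = o' := by
    intro o' z; simp [e]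
  have h2 : ∀ (o' : O) (z : {j // j ≠ p} → O) (r : {j // j ≠ p}),
      (e.symm (o', z)) r = z r := by
    intro o' z r; simp [e, r.2]
  have h3 : ∀ (o' : O) (z : {j // j ≠ p} → O), G (e.symm (o', z)) = G (e.symm (o, z)) := by
    intro o' z
    apply hG
    intro r hr
    rw [h2 o' z ⟨r, hr⟩, h2 o z ⟨r, hr⟩]
  have h4 : ∀ (o' : O) (z : {j // j ≠ p} → O),
      ∏ r, q (e.symm (o', z) r) = q o' * ∏ r, q (z r) := by
    intro o' z
    rw [Fintype.prod_eq_mul_prod_subtype_ne _ p, h1]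
    simp only [h2]
  simp only [h1, h4]
  have L : ∀ o' : O, ∑ z : {j // j ≠ p} → O, (q o' * ∏ r, q (z r)) *
      ((if o' = o then 1 else 0) * G (e.symm (o', z))) =
      if o' = o then q o * ∑ z : {j // j ≠ p} → O, (∏ r, q (z r)) * G (e.symm (o, z)) else 0 := by
    intro o'
    split_ifs with h
    · subst h
      rw [Finset.mul_sum]
      apply Finset.sum_congr rfl
      intro z _; ring
    · simp
  have R : ∀ o' : O, ∑ z : {j // j ≠ p} → O, (q o' * ∏ r, q (z r)) * G (e.symm (o', z)) =
      q o' * ∑ z : {j // j ≠ p} → O, (∏ r, q (z r)) * G (e.symm (o, z)) := by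
    intro o'
    rw [Finset.mul_sum]
    apply Finset.sum_congr rfl
    intro z _; rw [h3]; ring
  simp only [L, R]
  rw [Finset.sum_ite_eq' Finset.univ o, ← Finset.sum_mul, hq]
  simp

theorem indep_prod {P O : Type*} [Fintype P] [DecidableEq P] [Fintype O] [DecidableEq O]
    (q : O → ℝ) (hq : ∑ o, q o = 1) (S : Finset P) (g : P → O) (G : (P → O) → ℝ)
    (hG : ∀ x y, (∀ r, r ∉ S → x r = y r) → G x = G y) :
    ∑ x : P → O, (∏ r, q (x r)) * ((if ∀ p ∈ S, x p = g p then 1 else 0) * G x) =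
      (∏ p ∈ S, q (g p)) * ∑ x : P → O, (∏ r, q (x r)) * G x := by
  induction S using Finset.induction_on with
  | empty => simp
  | insert p S hp ih =>
    rw [Finset.prod_insert hp, mul_assoc, ← ih (fun x y h => hG x y (fun r hr => h r (by
      intro h'; exact hr (Finset.mem_insert_of_mem h'))))]
    rw [← indep_single q hq p (g p)]
    · apply Finset.sum_congr rfl
      intro x _
      congr 1
      by_cases h1 : x p = g p <;> by_cases h2 : ∀ p ∈ S, x p = g p
      · rw [if_pos h1, if_pos h2, if_pos]; · ring
        intro r hr
        rcases Finset.mem_insert.1 hr with rfl | hr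
        · exact h1
        · exact h2 r hr
      · rw [if_pos h1, if_neg h2, if_neg]; · ring
        intro h; exact h2 fun r hr => h r (Finset.mem_insert_of_mem hr)
      · rw [if_neg h1, if_neg]; · ring
        intro h; exact h1 (h p (Finset.mem_insert_self _ _))
      · rw [if_neg h1, if_neg]; · ring
        intro h; exact h1 (h p (Finset.mem_insert_self _ _))
    · intro x y h
      have e1 : (∀ r ∈ S, x r = g r) ↔ (∀ r ∈ S, y r = g r) := by
        refine forall₂_congr fun r hr => ?_
        rw [h r (fun h' => hp (h' ▸ hr))]
      have e2 : G x = G y := hG x y fun r hr => h r (fun h' => hr (h' ▸ Finset.mem_insert_self _ _))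
      simp only [e1, e2]

theorem sum_image_card (ι : Type*) [Fintype ι] [DecidableEq ι] (n : ℕ) :
    ∑ f : ι → Fin n, (1 / (n : ℝ)) ^ (Finset.univ.image f).card ≤
      (Fintype.card ι + 1) * (Fintype.card ι : ℝ) ^ (Fintype.card ι) := by
  set N := Fintype.card ι with hN
  have hmaps : ∀ f ∈ (Finset.univ : Finset (ι → Fin n)),
      (Finset.univ.image f).card ∈ Finset.range (N + 1) := by
    intro f _
    rw [Finset.mem_range, Nat.lt_succ_iff]
    exact Finset.card_image_le.trans (by simp [hN])
  rw [← Finset.sum_fiberwise_of_maps_to hmaps]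
  have hv : ∀ v ∈ Finset.range (N + 1),
      ∑ f ∈ (Finset.univ : Finset (ι → Fin n)).filter (fun f => (Finset.univ.image f).card = v),
        (1 / (n : ℝ)) ^ (Finset.univ.image f).card ≤ (N : ℝ) ^ N := by
    intro v hv
    have hvN : v ≤ N := Nat.lt_succ_iff.1 (Finset.mem_range.1 hv)
    have h1 : ∑ f ∈ (Finset.univ : Finset (ι → Fin n)).filter
        (fun f => (Finset.univ.image f).card = v),
        (1 / (n : ℝ)) ^ (Finset.univ.image f).card =
        ((Finset.univ : Finset (ι → Fin n)).filter
          (fun f => (Finset.univ.image f).card = v)).card * (1 / (n : ℝ)) ^ v := by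
      rw [Finset.sum_congr rfl (g := fun _ => (1 / (n : ℝ)) ^ v)]
      · simp
      · intro f hf; rw [(Finset.mem_filter.1 hf).2]
    have h2 : ((Finset.univ : Finset (ι → Fin n)).filter
          (fun f => (Finset.univ.image f).card = v)).card ≤ n ^ v * N ^ N := by
      calc _ ≤ ((Finset.powersetCard v (Finset.univ : Finset (Fin n))).biUnion
              (fun S => Fintype.piFinset fun _ : ι => S)).card := by
            apply Finset.card_le_card
            intro f hf
            rw [Finset.mem_biUnion]
            refine ⟨Finset.univ.image f, ?_, ?_⟩
            · simp [Finset.mem_powersetCard, (Finset.mem_filter.1 hf).2]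
            · simp [Fintype.mem_piFinset]
        _ ≤ (Finset.powersetCard v (Finset.univ : Finset (Fin n))).card * v ^ N := by
            apply Finset.card_biUnion_le_card_mul
            intro S hS
            simp [Fintype.card_piFinset, (Finset.mem_powersetCard.1 hS).2, hN]
        _ ≤ n ^ v * N ^ N := by
            rw [Finset.card_powersetCard]
            simp only [Finset.card_univ, Fintype.card_fin]
            exact Nat.mul_le_mul (Nat.choose_le_pow n v) (Nat.pow_le_pow_left hvN N)
    rw [h1]
    have h3 : (n : ℝ) ^ v * (1 / (n : ℝ)) ^ v ≤ 1 := by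
      rw [← mul_pow]
      apply pow_le_one₀ (by positivity)
      rw [mul_one_div]
      exact div_self_le_one _
    calc _ ≤ ((n ^ v * N ^ N : ℕ) : ℝ) * (1 / (n : ℝ)) ^ v := by
          apply mul_le_mul_of_nonneg_right (by exact_mod_cast h2) (by positivity)
      _ = ((n : ℝ) ^ v * (1 / (n : ℝ)) ^ v) * (N : ℝ) ^ N := by push_cast; ring
      _ ≤ 1 * (N : ℝ) ^ N := by gcongr
      _ = _ := one_mul _
  refine (Finset.sum_le_sum hv).trans ?_
  simp

end ProductPart

section CyclePart

open Fin.NatCast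

def Canon {n r : ℕ} (c : Fin (r + 3) → Fin n) : Prop :=
  Function.Injective c ∧ (∀ i, c 0 ≤ c i) ∧ c 1 < c (-1)

def toS {n : ℕ} (p : Pairs n) : Sym2 (Fin n) := s(p.1.1, p.1.2)

def es {n r : ℕ} (c : Fin (r + 3) → Fin n) : Finset (Sym2 (Fin n)) :=
  Finset.univ.image fun i => s(c i, c (i + 1))

def vs {n r : ℕ} (c : Fin (r + 3) → Fin n) : Finset (Fin n) := Finset.univ.image c

theorem toS_inj {n : ℕ} : Function.Injective (toS (n := n)) := by
  rintro ⟨⟨u, v⟩, h⟩ ⟨⟨u', v'⟩, h'⟩ e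
  simp only [toS, Sym2.eq_iff] at e
  simp only at h h'
  rcases e with ⟨rfl, rfl⟩ | ⟨rfl, rfl⟩
  · rfl
  · exact absurd h (not_lt.2 h'.le)

theorem toS_surj {n : ℕ} {u v : Fin n} (h : u ≠ v) : ∃ p : Pairs n, toS p = s(u, v) := by
  rcases lt_or_gt_of_ne h with h | h
  · exact ⟨⟨(u, v), h⟩, rfl⟩
  · exact ⟨⟨(v, u), h⟩, Sym2.eq_swap⟩

theorem getLabel_eq {n : ℕ} {L : Type*} (E : EdgeConf n L) {u v : Fin n} {p : Pairs n}
    (h : toS p = s(u, v)) : getLabel E u v = E p := by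
  obtain ⟨⟨x, y⟩, hp⟩ := p
  simp only [toS, Sym2.eq_iff] at h
  simp only at hp
  rcases h with ⟨rfl, rfl⟩ | ⟨rfl, rfl⟩
  · simp [getLabel, hp]
  · simp [getLabel, hp, hp.not_gt]

theorem fin_one_ne {r : ℕ} (i : Fin (r + 3)) : i ≠ i + 1 := by
  intro h
  have : (1 : Fin (r + 3)) = 0 := by simpa using h.symm
  have := congrArg Fin.val this
  simp at this

theorem fin_two_ne {r : ℕ} (i : Fin (r + 3)) : i + 1 + 1 ≠ i := by
  intro h
  rw [add_assoc] at h
  have : (1 + 1 : Fin (r + 3)) = 0 := by simpa using h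
  have := congrArg Fin.val this
  simp only [Fin.val_add, Fin.val_one, Fin.val_zero] at this
  rw [Nat.mod_eq_of_lt (by omega)] at this
  omega

theorem edge_ne {n r : ℕ} {c : Fin (r + 3) → Fin n} (hc : Function.Injective c) (i) :
    c i ≠ c (i + 1) := fun h => fin_one_ne i (hc h)

theorem edge_inj_s8 {n r : ℕ} {c : Fin (r + 3) → Fin n} (hc : Function.Injective c) :
    Function.Injective fun i => s(c i, c (i + 1)) := by
  intro i j h
  simp only [Sym2.eq_iff] at h
  rcases h with ⟨h, _⟩ | ⟨h1, h2⟩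
  · exact hc h
  · have h1 := hc h1; have h2 := hc h2
    rw [h1] at h2
    exact absurd h2 (fin_two_ne j)

theorem cyc_closed {r : ℕ} (A : Finset (Fin (r + 3))) (hA : A.Nonempty)
    (h : ∀ i ∈ A, i + 1 ∈ A) : ∀ i, i ∈ A := by
  obtain ⟨i0, h0⟩ := hA
  have : ∀ m : ℕ, i0 + (m : Fin (r + 3)) ∈ A := by
    intro m
    induction m with
    | zero => simpa using h0
    | succ m ih => have := h _ ih; rw [add_assoc] at this; simpa using this
  intro i
  have h1 := this (i - i0).val
  rw [Fin.cast_val_eq_self] at h1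
  simpa using h1

theorem half_lemma {n r r' : ℕ} {c : Fin (r + 3) → Fin n} (hc : Function.Injective c)
    {c' : Fin (r' + 3) → Fin n} (hne : (vs c ∩ vs c').Nonempty) :
    (es c ∩ es c').card ≤ (vs c ∩ vs c').card ∧
      ((es c ∩ es c').card = (vs c ∩ vs c').card → es c ⊆ es c') := by
  let A : Finset (Fin (r + 3)) := Finset.univ.filter fun i => c i ∈ vs c'
  let Dd : Finset (Fin (r + 3)) := Finset.univ.filter fun i => s(c i, c (i + 1)) ∈ es c'
  have hA : (vs c ∩ vs c').card = A.card := by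
    rw [← Finset.card_image_of_injective A hc]
    congr 1
    ext v
    simp only [vs, A, Finset.mem_inter, Finset.mem_image, Finset.mem_filter, Finset.mem_univ,
      true_and]
    constructor
    · rintro ⟨⟨i, rfl⟩, h⟩; exact ⟨i, h, rfl⟩
    · rintro ⟨i, h, rfl⟩; exact ⟨⟨i, rfl⟩, h⟩
  have hD : (es c ∩ es c').card = Dd.card := by
    rw [← Finset.card_image_of_injective Dd (edge_inj_s8 hc)]
    congr 1
    ext v
    simp only [es, Dd, Finset.mem_inter, Finset.mem_image, Finset.mem_filter, Finset.mem_univ,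
      true_and]
    constructor
    · rintro ⟨⟨i, rfl⟩, h⟩; exact ⟨i, h, rfl⟩
    · rintro ⟨i, h, rfl⟩; exact ⟨⟨i, rfl⟩, h⟩
  have hmem : ∀ i ∈ Dd, i ∈ A ∧ i + 1 ∈ A := by
    intro i hi
    simp only [Dd, es, Finset.mem_filter, Finset.mem_univ, true_and, Finset.mem_image] at hi
    obtain ⟨j, hj⟩ := hi
    simp only [A, vs, Finset.mem_filter, Finset.mem_univ, true_and, Finset.mem_image]
    rw [Sym2.eq_iff] at hj
    rcases hj with ⟨h1, h2⟩ | ⟨h1, h2⟩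
    · exact ⟨⟨_, h1⟩, ⟨_, h2⟩⟩
    · exact ⟨⟨_, h2⟩, ⟨_, h1⟩⟩
  have hsub : Dd ⊆ A := fun i hi => (hmem i hi).1
  rw [hA, hD]
  refine ⟨Finset.card_le_card hsub, fun h => ?_⟩
  have hDA := Finset.eq_of_subset_of_card_le hsub h.ge
  have hAn : A.Nonempty := by
    rw [← Finset.card_pos, ← hA, Finset.card_pos]; exact hne
  have hall := cyc_closed A hAn (fun i hi => (hmem i (hDA ▸ hi)).2)
  intro e he
  simp only [es, Finset.mem_image, Finset.mem_univ, true_and] at he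
  obtain ⟨i, rfl⟩ := he
  have := hall i
  rw [← hDA] at this
  exact (Finset.mem_filter.1 this).2

theorem card_es {n r : ℕ} {c : Fin (r + 3) → Fin n} (hc : Function.Injective c) :
    (es c).card = r + 3 := by
  rw [es, Finset.card_image_of_injective _ (edge_inj_s8 hc)]; simp

theorem card_vs {n r : ℕ} {c : Fin (r + 3) → Fin n} (hc : Function.Injective c) :
    (vs c).card = r + 3 := by
  rw [vs, Finset.card_image_of_injective _ hc]; simp

theorem union_lemma {n r r' : ℕ} {c : Fin (r + 3) → Fin n} (hc : Function.Injective c)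
    {c' : Fin (r' + 3) → Fin n} (hc' : Function.Injective c') (hne : (vs c ∩ vs c').Nonempty)
    (hes : es c ≠ es c') : (vs c ∪ vs c').card + 1 ≤ (es c ∪ es c').card := by
  have h1 := half_lemma hc hne
  have h2 := half_lemma hc' (c' := c) (by rwa [Finset.inter_comm])
  rw [Finset.inter_comm (es c'), Finset.inter_comm (vs c')] at h2
  have h3 : (es c ∩ es c').card ≠ (vs c ∩ vs c').card :=
    fun h => hes (Finset.Subset.antisymm (h1.2 h) (h2.2 h))
  have h4 := h1.1
  have h5 := Finset.card_union_add_card_inter (es c) (es c')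
  have h6 := Finset.card_union_add_card_inter (vs c) (vs c')
  rw [card_es hc, card_es hc'] at h5
  rw [card_vs hc, card_vs hc'] at h6
  omega

theorem adj_lemma {n r : ℕ} {c : Fin (r + 3) → Fin n} (hc : Function.Injective c)
    {i : Fin (r + 3)} {v : Fin n} (h : s(c i, v) ∈ es c) : v = c (i + 1) ∨ v = c (i - 1) := by
  simp only [es, Finset.mem_image, Finset.mem_univ, true_and, Sym2.eq_iff] at h
  obtain ⟨j, ⟨h1, h2⟩ | ⟨h1, h2⟩⟩ := h
  · left; rw [← hc h1, h2]
  · right; rw [← hc h2, ← h1]; simp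

theorem es_mem {n r : ℕ} (c : Fin (r + 3) → Fin n) (i) : s(c i, c (i + 1)) ∈ es c := by
  simp only [es, Finset.mem_image, Finset.mem_univ, true_and]; exact ⟨i, rfl⟩

theorem es_mem' {n r : ℕ} (c : Fin (r + 3) → Fin n) (i) : s(c i, c (i - 1)) ∈ es c := by
  have := es_mem c (i - 1)
  rw [sub_add_cancel, Sym2.eq_swap] at this; exact this

theorem vs_of_es {n r : ℕ} {c c' : Fin (r + 3) → Fin n} (h : es c = es c') (i) :
    ∃ j, c' j = c i := by
  have := es_mem c i
  rw [h] at this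
  simp only [es, Finset.mem_image, Finset.mem_univ, true_and, Sym2.eq_iff] at this
  obtain ⟨j, ⟨h1, h2⟩ | ⟨h1, h2⟩⟩ := this
  · exact ⟨_, h1⟩
  · exact ⟨_, h2⟩

theorem canon_unique {n r : ℕ} {c c' : Fin (r + 3) → Fin n} (hc : Canon c) (hc' : Canon c')
    (h : es c = es c') : c = c' := by
  obtain ⟨i1, m1, l1⟩ := hc
  obtain ⟨i2, m2, l2⟩ := hc'
  have h0 : c' 0 = c 0 := by
    apply le_antisymm
    · obtain ⟨j, hj⟩ := vs_of_es h 0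
      rw [← hj]; exact m2 j
    · obtain ⟨j, hj⟩ := vs_of_es h.symm 0
      rw [← hj]; exact m1 j
  have h1 : c' 1 = c 1 := by
    have e1 : c' 1 = c 1 ∨ c' 1 = c (-1) := by
      have := es_mem c' 0
      rw [← h, h0] at this
      simpa using adj_lemma i1 this
    have e2 : c' (-1) = c 1 ∨ c' (-1) = c (-1) := by
      have := es_mem' c' 0
      rw [← h, h0] at this
      simpa using adj_lemma i1 this
    rcases e1 with e1 | e1
    · exact e1
    · rcases e2 with e2 | e2
      · rw [e1, e2] at l2; exact absurd l2 (not_lt.2 l1.le)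
      · rw [e1, e2] at l2; exact absurd l2 (lt_irrefl _)
  have key : ∀ m : ℕ, c' (m : Fin (r + 3)) = c m ∧ c' ((m : Fin (r + 3)) + 1) = c (m + 1) := by
    intro m
    induction m with
    | zero => simpa using ⟨h0, h1⟩
    | succ m ih =>
      obtain ⟨ih1, ih2⟩ := ih
      push_cast
      refine ⟨ih2, ?_⟩
      have := es_mem c' ((m : Fin (r + 3)) + 1)
      rw [← h, ih2] at this
      rcases adj_lemma i1 this with e | e
      · exact e
      · rw [add_sub_cancel_right, ← ih1] at e
        exact absurd (i2 e) (fin_two_ne _)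
  funext i
  have := (key i.val).1
  rw [Fin.cast_val_eq_self] at this
  exact this.symm

end CyclePart

section CountPart

open Classical in
theorem card_canon (n r : ℕ) :
    2 * (r + 3) * (Finset.univ.filter fun c : Fin (r + 3) → Fin n => Canon c).card =
      n.descFactorial (r + 3) := by
  let F : Fin (r + 3) → Finset (Fin (r + 3) → Fin n) := fun j =>
    Finset.univ.filter fun c => Function.Injective c ∧ ∀ i, c j ≤ c i
  have hInj : (Finset.univ.filter fun c : Fin (r + 3) → Fin n => Function.Injective c).card =
      n.descFactorial (r + 3) := by
    rw [← Fintype.card_subtype, Fintype.card_congr (Equiv.subtypeInjectiveEquivEmbedding _ _),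
      Fintype.card_embedding_eq]
    simp
  have hU : (Finset.univ.filter fun c : Fin (r + 3) → Fin n => Function.Injective c) =
      Finset.univ.biUnion F := by
    ext c
    simp only [F, Finset.mem_filter, Finset.mem_univ, true_and, Finset.mem_biUnion]
    constructor
    · intro hc
      obtain ⟨j, _, hj⟩ := Finset.exists_min_image (Finset.univ : Finset (Fin (r + 3))) c
        ⟨0, Finset.mem_univ _⟩
      exact ⟨j, hc, fun i => hj i (Finset.mem_univ i)⟩
    · rintro ⟨j, hc, _⟩; exact hc
  have hcard : (Finset.univ.biUnion F).card = ∑ j, (F j).card := by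
    apply Finset.card_biUnion
    intro i _ j _ hij
    change Disjoint (F i) (F j)
    rw [Finset.disjoint_left]
    intro c hi hj
    simp only [F, Finset.mem_filter, Finset.mem_univ, true_and] at hi hj
    exact hij (hi.1 (le_antisymm (hi.2 j) (hj.2 i)))
  have hF : ∀ j, (F j).card = (F 0).card := by
    intro j
    apply Finset.card_equiv (Equiv.arrowCongr (Equiv.subRight j) (Equiv.refl _))
    intro c
    simp only [F, Finset.mem_filter, Finset.mem_univ, true_and]
    have e : ∀ i, (Equiv.arrowCongr (Equiv.subRight j) (Equiv.refl (Fin n)) c) i = c (i + j) := by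
      intro i; rfl
    have e' : (Equiv.arrowCongr (Equiv.subRight j) (Equiv.refl (Fin n)) c : Fin (r + 3) → Fin n) =
      c ∘ (Equiv.addRight j) := by funext i; rfl
    refine and_congr ?_ ?_
    · rw [e', Equiv.injective_comp]
    · simp only [e, zero_add]
      exact ⟨fun h i => h _, fun h i => by simpa using h (i - j)⟩
  let C := Finset.univ.filter fun c : Fin (r + 3) → Fin n => Canon c
  let C' := Finset.univ.filter fun c : Fin (r + 3) → Fin n =>
    Function.Injective c ∧ (∀ i, c 0 ≤ c i) ∧ c (-1) < c 1
  have hC : ∀ c, c ∈ C ↔ Function.Injective c ∧ (∀ i, c 0 ≤ c i) ∧ c 1 < c (-1) := by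
    intro c; rw [Finset.mem_filter]; simp only [Finset.mem_univ, true_and]; rfl
  have hC' : ∀ c, c ∈ C' ↔ Function.Injective c ∧ (∀ i, c 0 ≤ c i) ∧ c (-1) < c 1 := by
    intro c; rw [Finset.mem_filter]; simp only [Finset.mem_univ, true_and]
  have hCC' : C.card = C'.card := by
    apply Finset.card_equiv (Equiv.arrowCongr (Equiv.neg _) (Equiv.refl _))
    intro c
    rw [hC, hC']
    have e : ∀ i, (Equiv.arrowCongr (Equiv.neg _) (Equiv.refl (Fin n)) c) i = c (-i) := by
      intro i; rfl
    have e' : (Equiv.arrowCongr (Equiv.neg _) (Equiv.refl (Fin n)) c) =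
      c ∘ (Equiv.neg _) := by funext i; rfl
    refine and_congr ?_ (and_congr ?_ ?_)
    · rw [e', Equiv.injective_comp]
    · simp only [e, neg_zero]
      exact ⟨fun h i => h _, fun h i => by simpa using h (-i)⟩
    · simp only [e, neg_neg]
  have hF0 : F 0 = C ∪ C' := by
    ext c
    rw [Finset.mem_union, hC, hC']
    simp only [F, Finset.mem_filter, Finset.mem_univ, true_and]
    constructor
    · rintro ⟨h1, h2⟩
      have : c 1 ≠ c (-1) := by
        intro h
        have h := h1 h
        have h3 := fin_two_ne (-1 : Fin (r + 3))
        rw [neg_add_cancel, zero_add] at h3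
        exact h3 h
      rcases lt_or_gt_of_ne this with h | h
      · exact Or.inl ⟨h1, h2, h⟩
      · exact Or.inr ⟨h1, h2, h⟩
    · rintro (⟨h1, h2, _⟩ | ⟨h1, h2, _⟩) <;> exact ⟨h1, h2⟩
  have hdis : Disjoint C C' := by
    rw [Finset.disjoint_left]
    intro c h1 h2
    rw [hC] at h1; rw [hC'] at h2
    exact absurd h1.2.2 (not_lt.2 h2.2.2.le)
  rw [← hInj, hU, hcard]
  simp only [hF]
  rw [hF0, Finset.card_union_of_disjoint hdis, ← hCC']
  simp only [Finset.sum_const, Finset.card_univ, Fintype.card_fin, smul_eq_mul, C]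
  ring

theorem descFactorial_limit (k : ℕ) :
    Tendsto (fun n : ℕ => (n.descFactorial k : ℝ) / (n : ℝ) ^ k) atTop (nhds 1) := by
  induction k with
  | zero => simp
  | succ k ih =>
    have h1 : Tendsto (fun n : ℕ => 1 - (k : ℝ) / n) atTop (nhds (1 - 0)) :=
      tendsto_const_nhds.sub (tendsto_const_div_atTop_nhds_zero_nat (k : ℝ))
    have h2 := h1.mul ih
    simp only [sub_zero, mul_one] at h2
    refine h2.congr' ?_
    filter_upwards [eventually_ge_atTop (k + 1)] with n hn
    have hn0 : (n : ℝ) ≠ 0 := by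
      have : n ≠ 0 := by omega
      exact_mod_cast this
    rw [Nat.descFactorial_succ, Nat.cast_mul, Nat.cast_sub (by omega), pow_succ]
    field_simp

end CountPart

section Assembly

variable {L : Type*}

def Ev {n r : ℕ} (c : Fin (r + 3) → Fin n) (l : Fin (r + 3) → L) (E : EdgeConf n L) : Prop :=
  Canon c ∧ ∀ i, getLabel E (c i) (c (i + 1)) = some (l i)

open Classical in
noncomputable def Iv {n r : ℕ} (c : Fin (r + 3) → Fin n) (l : Fin (r + 3) → L)
    (E : EdgeConf n L) : ℕ := if Ev c l E then 1 else 0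

theorem cycleCount_eq [DecidableEq L] (n r : ℕ) (E : EdgeConf n L) (l : Fin (r + 3) → L) :
    cycleCount n (r + 3) E l = ∑ c, Iv c l E := by
  classical
  unfold cycleCount
  rw [dif_pos (by omega), Finset.card_filter]
  apply Finset.sum_congr rfl
  intro c _
  unfold Iv
  have hl : (⟨r + 3 - 1, by omega⟩ : Fin (r + 3)) = -1 := by
    have := Fin.neg_last (r + 2)
    rw [← this, neg_neg]; rfl
  apply if_congr _ rfl rfl
  rw [Ev, Canon, hl]
  tauto

def SP {n r : ℕ} (c : Fin (r + 3) → Fin n) : Finset (Pairs n) :=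
  Finset.univ.filter fun p => toS p ∈ es c

theorem exists_edge {n r : ℕ} {c : Fin (r + 3) → Fin n} (hc : Canon c) :
    ∃ ed : Fin (r + 3) → Pairs n, Function.Injective ed ∧
      (∀ i, toS (ed i) = s(c i, c (i + 1))) ∧ SP c = Finset.univ.image ed := by
  choose ed hed using fun i => toS_surj (edge_ne hc.1 i)
  refine ⟨ed, ?_, hed, ?_⟩
  · intro i j h
    apply edge_inj_s8 hc.1
    simp only [← hed, h]
  · ext p
    simp only [SP, es, Finset.mem_filter, Finset.mem_univ, true_and, Finset.mem_image, ← hed]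
    exact ⟨fun ⟨i, h⟩ => ⟨i, toS_inj h⟩, fun ⟨i, h⟩ => ⟨i, by rw [h]⟩⟩

theorem exists_conf {n r : ℕ} {c : Fin (r + 3) → Fin n} (hc : Canon c) (l : Fin (r + 3) → L) :
    ∃ g : EdgeConf n L, Ev c l g := by
  classical
  obtain ⟨ed, hinj, hed, _⟩ := exists_edge hc
  refine ⟨fun p => if h : ∃ i, ed i = p then some (l h.choose) else none, hc, fun i => ?_⟩
  rw [getLabel_eq _ (hed i)]
  have h : ∃ j, ed j = ed i := ⟨i, rfl⟩
  rw [dif_pos h, hinj h.choose_spec]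

theorem Ev_iff {n r : ℕ} {c : Fin (r + 3) → Fin n} {l : Fin (r + 3) → L} {g : EdgeConf n L}
    (hg : Ev c l g) (E : EdgeConf n L) : Ev c l E ↔ ∀ p ∈ SP c, E p = g p := by
  obtain ⟨ed, hinj, hed, hS⟩ := exists_edge hg.1
  have h1 : ∀ E : EdgeConf n L, ∀ i, getLabel E (c i) (c (i + 1)) = E (ed i) :=
    fun E i => getLabel_eq E (hed i)
  have h2 := hg.2
  simp only [h1] at h2
  simp only [Ev, h1, hS, hg.1, true_and, Finset.mem_image, Finset.mem_univ,
    forall_exists_index, forall_apply_eq_imp_iff, h2]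

theorem prod_SP {n r : ℕ} {c : Fin (r + 3) → Fin n} {l : Fin (r + 3) → L} {g : EdgeConf n L}
    (hg : Ev c l g) (q : Option L → ℝ) : ∏ p ∈ SP c, q (g p) = ∏ i, q (some (l i)) := by
  obtain ⟨ed, hinj, hed, hS⟩ := exists_edge hg.1
  rw [hS, Finset.prod_image (fun _ _ _ _ h => hinj h)]
  apply Finset.prod_congr rfl
  intro i _
  rw [← getLabel_eq g (hed i), hg.2 i]

theorem SP_some {n r : ℕ} {c : Fin (r + 3) → Fin n} {l : Fin (r + 3) → L} {g : EdgeConf n L}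
    (hg : Ev c l g) {p : Pairs n} (hp : p ∈ SP c) : ∃ x, g p = some x := by
  obtain ⟨ed, hinj, hed, hS⟩ := exists_edge hg.1
  rw [hS, Finset.mem_image] at hp
  obtain ⟨i, _, rfl⟩ := hp
  exact ⟨l i, by rw [← getLabel_eq g (hed i), hg.2 i]⟩

theorem SP_image {n r : ℕ} {c : Fin (r + 3) → Fin n} (hc : Canon c) :
    (SP c).image toS = es c := by
  obtain ⟨ed, hinj, hed, hS⟩ := exists_edge hc
  rw [hS, Finset.image_image, es]
  congr 1
  funext i; exact hed i

theorem card_SP_union {n r r' : ℕ} {c : Fin (r + 3) → Fin n} (hc : Canon c)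
    {c' : Fin (r' + 3) → Fin n} (hc' : Canon c') :
    (SP c ∪ SP c').card = (es c ∪ es c').card := by
  rw [← SP_image hc, ← SP_image hc', ← Finset.image_union,
    Finset.card_image_of_injective _ toS_inj]

theorem Iv_zero_one {n r : ℕ} (c : Fin (r + 3) → Fin n) (l : Fin (r + 3) → L)
    (E : EdgeConf n L) : Iv c l E = 0 ∨ Iv c l E = 1 := by
  unfold Iv; split_ifs <;> simp

theorem Iv_congr {n r r' : ℕ} {c : Fin (r + 3) → Fin n} {c' : Fin (r' + 3) → Fin n}
    (l' : Fin (r' + 3) → L) (hd : ¬ (vs c ∩ vs c').Nonempty) {x y : EdgeConf n L}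
    (hxy : ∀ p, p ∉ SP c → x p = y p) : Iv c' l' x = Iv c' l' y := by
  classical
  unfold Iv
  apply if_congr _ rfl rfl
  unfold Ev
  refine and_congr_right fun hc' => forall_congr' fun i => ?_
  obtain ⟨p, hp⟩ := toS_surj (edge_ne hc'.1 i)
  rw [getLabel_eq x hp, getLabel_eq y hp, hxy p]
  intro hpS
  apply hd
  simp only [SP, es, Finset.mem_filter, Finset.mem_univ, true_and, Finset.mem_image, hp,
    Sym2.eq_iff] at hpS
  refine ⟨c' i, ?_⟩
  simp only [vs, Finset.mem_inter, Finset.mem_image, Finset.mem_univ, true_and]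
  obtain ⟨j, ⟨h1, _⟩ | ⟨_, h1⟩⟩ := hpS
  · exact ⟨⟨_, h1⟩, ⟨_, rfl⟩⟩
  · exact ⟨⟨_, h1⟩, ⟨_, rfl⟩⟩

open Classical in
noncomputable def pv {n r : ℕ} (q : Option L → ℝ) (c : Fin (r + 3) → Fin n)
    (l : Fin (r + 3) → L) : ℝ := if Canon c then ∏ i, q (some (l i)) else 0

theorem Iv_indep [Fintype L] {n r : ℕ} (q : Option L → ℝ) (hq : ∑ o, q o = 1)
    (c : Fin (r + 3) → Fin n) (l : Fin (r + 3) → L) (G : EdgeConf n L → ℝ)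
    (hG : ∀ x y : EdgeConf n L, (∀ p, p ∉ SP c → x p = y p) → G x = G y) :
    ∑ E : EdgeConf n L, (∏ p, q (E p)) * ((Iv c l E : ℝ) * G E) =
      pv q c l * ∑ E : EdgeConf n L, (∏ p, q (E p)) * G E := by
  classical
  by_cases hc : Canon c
  · obtain ⟨g, hg⟩ := exists_conf hc l
    rw [pv, if_pos hc, ← prod_SP hg, ← indep_prod q hq (SP c) g G hG]
    apply Finset.sum_congr rfl
    intro E _
    rw [Iv]
    simp only [Ev_iff hg]
    push_cast
    congr
  · have : ∀ E, Iv c l E = 0 := by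
      intro E; rw [Iv, if_neg]; exact fun h => hc h.1
    simp [pv, hc, this]

theorem pv_le {n r : ℕ} (q : Option L → ℝ) (hq0 : ∀ o, 0 ≤ q o) (δ : ℝ) (hδ : 0 ≤ δ)
    (hqδ : ∀ x, q (some x) ≤ δ) (c : Fin (r + 3) → Fin n) (l : Fin (r + 3) → L) :
    pv q c l ≤ if Function.Injective c then δ ^ (r + 3) else 0 := by
  unfold pv
  by_cases hc : Canon c
  · rw [if_pos hc, if_pos hc.1]
    calc ∏ i, q (some (l i)) ≤ ∏ i : Fin (r + 3), δ :=
          Finset.prod_le_prod (fun i _ => hq0 _) (fun i _ => hqδ _)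
      _ = _ := by simp
  · rw [if_neg hc]; split_ifs
    · positivity
    · exact le_rfl

theorem pv_nonneg {n r : ℕ} (q : Option L → ℝ) (hq0 : ∀ o, 0 ≤ q o)
    (c : Fin (r + 3) → Fin n) (l : Fin (r + 3) → L) : 0 ≤ pv q c l := by
  unfold pv
  split_ifs
  · exact Finset.prod_nonneg fun i _ => hq0 _
  · exact le_rfl

theorem b1_bound {n r r' : ℕ} (q : Option L → ℝ) (hq0 : ∀ o, 0 ≤ q o) (δ : ℝ) (hδ : 0 ≤ δ)
    (hδ1 : δ ≤ 1) (hqδ : ∀ x, q (some x) ≤ δ) (c : Fin (r + 3) → Fin n) (l : Fin (r + 3) → L)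
    (c' : Fin (r' + 3) → Fin n) (l' : Fin (r' + 3) → L) (hd : (vs c ∩ vs c').Nonempty) :
    pv q c l * pv q c' l' ≤ δ ^ ((vs c ∪ vs c').card + 1) := by
  have h1 := pv_le q hq0 δ hδ hqδ c l
  have h2 := pv_le q hq0 δ hδ hqδ c' l'
  have h3 := mul_le_mul h1 h2 (pv_nonneg q hq0 c' l') ((pv_nonneg q hq0 c l).trans h1)
  refine h3.trans ?_
  by_cases hc : Function.Injective c
  · by_cases hc' : Function.Injective c'
    · rw [if_pos hc, if_pos hc', ← pow_add]
      apply pow_le_pow_of_le_one hδ hδ1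
      have h6 := Finset.card_union_add_card_inter (vs c) (vs c')
      rw [card_vs hc, card_vs hc'] at h6
      have := hd.card_pos
      omega
    · rw [if_neg hc']; simp; positivity
  · rw [if_neg hc]; simp; positivity

theorem b2_bound [Fintype L] {n r r' : ℕ} (q : Option L → ℝ) (hq : ∑ o, q o = 1)
    (hq0 : ∀ o, 0 ≤ q o) (δ : ℝ) (hδ : 0 ≤ δ)
    (hδ1 : δ ≤ 1) (hqδ : ∀ x, q (some x) ≤ δ) (c : Fin (r + 3) → Fin n) (l : Fin (r + 3) → L)
    (c' : Fin (r' + 3) → Fin n) (l' : Fin (r' + 3) → L) (hd : (vs c ∩ vs c').Nonempty)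
    (hes : ∀ x : EdgeConf n L, Ev c l x → Ev c' l' x → es c ≠ es c') :
    ∑ E : EdgeConf n L, (∏ p, q (E p)) * ((Iv c l E : ℝ) * Iv c' l' E) ≤
      δ ^ ((vs c ∪ vs c').card + 1) := by
  classical
  by_cases hex : ∃ x : EdgeConf n L, Ev c l x ∧ Ev c' l' x
  · obtain ⟨x, h1, h2⟩ := hex
    have key := indep_prod q hq (SP c ∪ SP c') x (fun _ => 1) (by intros; rfl)
    have htot : ∑ E : EdgeConf n L, (∏ p, q (E p)) * 1 = 1 := by
      have := indep_prod q hq (∅ : Finset (Pairs n)) x (fun _ => 1) (by intros; rfl)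
      simp only [mul_one]
      rw [← Fintype.prod_sum (fun (_ : Pairs n) o => q o)]
      simp [hq]
    have hle : ∑ E : EdgeConf n L, (∏ p, q (E p)) * ((Iv c l E : ℝ) * Iv c' l' E) ≤
        ∑ E : EdgeConf n L, (∏ p, q (E p)) *
          ((if ∀ p ∈ SP c ∪ SP c', E p = x p then 1 else 0) * 1) := by
      apply Finset.sum_le_sum
      intro E _
      apply mul_le_mul_of_nonneg_left _ (Finset.prod_nonneg fun p _ => hq0 _)
      unfold Iv
      by_cases e1 : Ev c l E
      · by_cases e2 : Ev c' l' E
        · rw [if_pos e1, if_pos e2, if_pos]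
          · simp
          · intro p hp
            rcases Finset.mem_union.1 hp with hp | hp
            · exact (Ev_iff h1 E).1 e1 p hp
            · exact (Ev_iff h2 E).1 e2 p hp
        · rw [if_neg e2]; simp; split_ifs <;> simp
      · rw [if_neg e1]; simp; split_ifs <;> simp
    refine hle.trans ?_
    rw [key, htot, mul_one]
    calc ∏ p ∈ SP c ∪ SP c', q (x p) ≤ ∏ p ∈ SP c ∪ SP c', δ := by
          apply Finset.prod_le_prod (fun p _ => hq0 _)
          intro p hp
          rcases Finset.mem_union.1 hp with hp | hp
          · obtain ⟨y, hy⟩ := SP_some h1 hp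
            rw [hy]; exact hqδ y
          · obtain ⟨y, hy⟩ := SP_some h2 hp
            rw [hy]; exact hqδ y
      _ = δ ^ (es c ∪ es c').card := by
          rw [Finset.prod_const, card_SP_union h1.1 h2.1]
      _ ≤ _ := pow_le_pow_of_le_one hδ hδ1 (union_lemma h1.1.1 h2.1.1 hd (hes x h1 h2))
  · have : ∀ E : EdgeConf n L, (∏ p, q (E p)) * ((Iv c l E : ℝ) * Iv c' l' E) = 0 := by
      intro E
      unfold Iv
      by_cases e1 : Ev c l E
      · by_cases e2 : Ev c' l' E
        · exact absurd ⟨E, e1, e2⟩ hex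
        · rw [if_neg e2]; simp
      · rw [if_neg e1]; simp
    simp only [this, Finset.sum_const_zero]
    positivity

noncomputable def KK (C : ℝ) (r r' : ℕ) : ℝ :=
  C ^ (r + r' + 7) * (((r + r' + 6 : ℕ) + 1 : ℝ) * ((r + r' + 6 : ℕ) : ℝ) ^ (r + r' + 6))

theorem pair_sum (C : ℝ) (hC : 1 ≤ C) (n r r' : ℕ) :
    ∑ c : Fin (r + 3) → Fin n, ∑ c' : Fin (r' + 3) → Fin n,
      (C / n) ^ ((vs c ∪ vs c').card + 1) ≤ KK C r r' / n := by
  have h1 := sum_image_card (Fin (r + 3) ⊕ Fin (r' + 3)) n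
  have hcard : Fintype.card (Fin (r + 3) ⊕ Fin (r' + 3)) = r + r' + 6 := by
    simp; omega
  rw [hcard, ← (Equiv.sumArrowEquivProdArrow _ _ _).symm.sum_comp, Fintype.sum_prod_type] at h1
  have him : ∀ (c : Fin (r + 3) → Fin n) (c' : Fin (r' + 3) → Fin n),
      Finset.univ.image ((Equiv.sumArrowEquivProdArrow _ _ _).symm (c, c')) = vs c ∪ vs c' := by
    intro c c'
    ext v
    simp [vs, Equiv.sumArrowEquivProdArrow]
  simp only [him] at h1
  have hterm : ∀ (c : Fin (r + 3) → Fin n) (c' : Fin (r' + 3) → Fin n),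
      (C / n) ^ ((vs c ∪ vs c').card + 1) ≤
        C ^ (r + r' + 7) / n * (1 / (n : ℝ)) ^ (vs c ∪ vs c').card := by
    intro c c'
    have hv : (vs c ∪ vs c').card + 1 ≤ r + r' + 7 := by
      have h1 := Finset.card_union_le (vs c) (vs c')
      have h2 : (vs c).card ≤ r + 3 := Finset.card_image_le.trans (by simp)
      have h3 : (vs c').card ≤ r' + 3 := Finset.card_image_le.trans (by simp)
      omega
    have e : (C / n) ^ ((vs c ∪ vs c').card + 1) =
        C ^ ((vs c ∪ vs c').card + 1) / n * (1 / (n : ℝ)) ^ (vs c ∪ vs c').card := by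
      rw [div_pow, pow_succ (n : ℝ), one_div, inv_pow]
      field_simp
    rw [e]
    have := pow_le_pow_right₀ hC hv
    gcongr
  refine (Finset.sum_le_sum fun c _ => Finset.sum_le_sum fun c' _ => hterm c c').trans ?_
  simp only [← Finset.mul_sum]
  have hnn : 0 ≤ C ^ (r + r' + 7) / n := by positivity
  refine (mul_le_mul_of_nonneg_left h1 hnn).trans (le_of_eq ?_)
  unfold KK
  ring

theorem pv_sum_limit [Fintype L] (a b : ℝ) (ha : 0 < a) (hb : 0 < b) (μ ν : L → ℝ) (r : ℕ)
    (l : Fin (r + 3) → L) :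
    Tendsto (fun n : ℕ => ∑ c : Fin (r + 3) → Fin n, pv (erPairMass n a b μ ν) c l) atTop
      (nhds (lamER a b μ ν l)) := by
  classical
  have h := (descFactorial_limit (r + 3)).const_mul (lamER a b μ ν l)
  rw [mul_one] at h
  refine h.congr' ?_
  filter_upwards [eventually_ge_atTop 1] with n hn
  have hn0 : (n : ℝ) ≠ 0 := by
    have : n ≠ 0 := by omega
    exact_mod_cast this
  have e : ∑ c : Fin (r + 3) → Fin n, pv (erPairMass n a b μ ν) c l =
      (Finset.univ.filter fun c : Fin (r + 3) → Fin n => Canon c).card *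
        ∏ i, erPairMass n a b μ ν (some (l i)) := by
    unfold pv
    rw [← Finset.sum_filter, Finset.sum_const, nsmul_eq_mul]
  have hcard : (n.descFactorial (r + 3) : ℝ) = 2 * (r + 3) *
      (Finset.univ.filter fun c : Fin (r + 3) → Fin n => Canon c).card := by
    rw [← card_canon]; push_cast; congr!
  have hq : ∀ x, erPairMass n a b μ ν (some x) = (a * μ x + b * ν x) * (1 / (2 * n)) := by
    intro x
    have : a + b ≠ 0 := by positivity
    simp only [erPairMass]
    field_simp
  rw [e, hcard]
  simp only [hq, Finset.prod_mul_distrib, Finset.prod_const, Finset.card_univ, Fintype.card_fin,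
    lamER]
  have : ((r : ℝ) + 3) ≠ 0 := by positivity
  push_cast
  rw [one_div_pow, mul_pow]
  field_simp
  ring

end Assembly

section Final

abbrev TT (L : Type*) (m : ℕ) := Σ j : Fin (m - 2), (Fin (j.val + 3) → L)

abbrev AA (L : Type*) (m n : ℕ) := Σ t : TT L m, (Fin (t.1.val + 3) → Fin n)

theorem sum_AA {L : Type*} [Fintype L] [DecidableEq L] {M : Type*} [AddCommMonoid M] (m n : ℕ)
    (F : AA L m n → M) (t : TT L m) :
    (∑ α : AA L m n, if α.1 = t then F α else 0) = ∑ c, F ⟨t, c⟩ := by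
  rw [Fintype.sum_sigma, Finset.sum_eq_single t]
  · simp
  · intro s _ hs
    simp [hs]
  · simp

theorem AA_pair_sum {L : Type*} [Fintype L] [DecidableEq L] (C : ℝ) (hC : 1 ≤ C) (m n : ℕ) :
    ∑ α : AA L m n, ∑ β : AA L m n, (C / n) ^ ((vs α.2 ∪ vs β.2).card + 1) ≤
      (∑ t : TT L m, ∑ t' : TT L m, KK C t.1.val t'.1.val) / n := by
  rw [Fintype.sum_sigma, Finset.sum_div]
  refine Finset.sum_le_sum fun t _ => ?_
  have h1 : ∀ c : Fin (t.1.val + 3) → Fin n,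
      ∑ β : AA L m n, (C / (n : ℝ)) ^ ((vs c ∪ vs β.2).card + 1) =
      ∑ t' : TT L m, ∑ c' : Fin (t'.1.val + 3) → Fin n,
        (C / (n : ℝ)) ^ ((vs c ∪ vs c').card + 1) := by
    intro c
    rw [Fintype.sum_sigma]
  rw [Finset.sum_congr rfl fun c _ => h1 c, Finset.sum_comm, Finset.sum_div]
  refine Finset.sum_le_sum fun t' _ => ?_
  exact pair_sum C hC n _ _

theorem stein_app {L : Type*} [Fintype L] [DecidableEq L] {m n : ℕ} (q : Option L → ℝ)
    (hq1 : ∑ o, q o = 1) (hq0 : ∀ o, 0 ≤ q o) (C : ℝ) (hC : 1 ≤ C)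
    (hδ : 0 ≤ C / (n : ℝ)) (hδ1 : C / (n : ℝ) ≤ 1) (hqδ : ∀ x, q (some x) ≤ C / (n : ℝ))
    (h : (TT L m → ℕ) → ℝ) (hh : ∀ x, |h x| ≤ 1) (t : TT L m) :
    |∑ E : EdgeConf n L, (∏ p, q (E p)) *
        ((cntX (fun α : AA L m n => α.1) (fun α : AA L m n => Iv α.2 α.1.2) E t : ℝ) *
          h (cntX (fun α : AA L m n => α.1) (fun α : AA L m n => Iv α.2 α.1.2) E)) -
      (∑ α : AA L m n, if α.1 = t then pv q α.2 α.1.2 else 0) *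
        ∑ E : EdgeConf n L, (∏ p, q (E p)) *
          h (cntX (fun α : AA L m n => α.1) (fun α : AA L m n => Iv α.2 α.1.2) E +
            Pi.single t 1)| ≤
      4 * (∑ t : TT L m, ∑ t' : TT L m, KK C t.1.val t'.1.val) / n := by
  have S := stein_bound (fun E : EdgeConf n L => ∏ p, q (E p))
    (fun E => Finset.prod_nonneg fun p _ => hq0 _)
    (by
      have := Fintype.prod_sum (fun (_ : Pairs n) o => q o)
      simp only [hq1, Finset.prod_const_one] at this
      exact this.symm)
    (fun α : AA L m n => Iv α.2 α.1.2) (fun α E => Iv_zero_one _ _ _) (fun α : AA L m n => α.1)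
    (fun α β => (vs α.2 ∩ vs β.2).Nonempty)
    (fun α => ⟨α.2 0, by simp [vs]⟩)
    (fun α => pv (q) α.2 α.1.2)
    (fun α G hG => Iv_indep (q) (hq1) α.2 α.1.2 G (fun x y hxy => hG x y
      (fun β hβ => Iv_congr β.1.2 hβ hxy)))
    (fun α β => (C / n) ^ ((vs α.2 ∪ vs β.2).card + 1))
    (fun α β hd => b1_bound (q) (hq0) _ hδ hδ1 (hqδ) _ _ _ _ hd)
    (by
      intro α β hd hne
      refine b2_bound (q) (hq1) (hq0) _ hδ hδ1 (hqδ) _ _ _ _ hd ?_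
      intro x hα hβ hes
      apply hne
      obtain ⟨⟨j, l⟩, c⟩ := α
      obtain ⟨⟨j', l'⟩, c'⟩ := β
      simp only at hα hβ hes
      have h1 : (es c).card = j.val + 3 := card_es hα.1.1
      have h2 : (es c').card = j'.val + 3 := card_es hβ.1.1
      have h3 : (es c).card = (es c').card := congrArg Finset.card hes
      have hj : j = j' := Fin.ext (by omega)
      subst hj
      have hcc := canon_unique hα.1 hβ.1 hes
      subst hcc
      have hll : l = l' := by
        funext i
        have := (hα.2 i).symm.trans (hβ.2 i)
        simpa using this
      subst hll
      rfl)
    h hh t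
  refine S.trans ?_
  rw [mul_div_assoc]
  refine mul_le_mul_of_nonneg_left (le_trans (Finset.sum_le_sum fun α _ =>
    Finset.sum_le_sum fun β _ => ?_) (AA_pair_sum (L := L) C hC m n)) (by norm_num)
  split_ifs
  · exact le_rfl
  · positivity

end Final

/-- **Lemma (Cycle counts under the labeled Erdős–Rényi model, Lemma 2, first part).**
For any fixed `m ≥ 3`, the cycle counts `{X_n([ℓ]_k) : [ℓ]_k ∈ 𝓛^k, 3 ≤ k ≤ m}`
converge jointly in distribution under `ℙ'_n` to independent Poisson random variables
with means `λ([ℓ]_k)`; since the variables are ℕ-valued, this is expressed as pointwise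
convergence of the joint probability mass function. -/
theorem cycle_counts_er
    {L : Type*} [Fintype L] [DecidableEq L] (a b : ℝ) (ha : 0 < a) (hb : 0 < b)
    (μ ν : L → ℝ) (hμ : IsProbVec μ) (hν : IsProbVec ν)
    (m : ℕ) (hm : 3 ≤ m) (target : (k : ℕ) → (Fin k → L) → ℕ) :
    Filter.Tendsto (fun n : ℕ =>
      erProb n a b μ ν
        {E | ∀ (k : ℕ), 3 ≤ k → k ≤ m → ∀ ℓ : Fin k → L,
          cycleCount n k E ℓ = target k ℓ})
      Filter.atTop
      (nhds (∏ k ∈ Finset.Icc 3 m, ∏ ℓ : Fin k → L,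
        poissonPMF (lamER a b μ ν ℓ) (target k ℓ))) := by
  classical
  have hab : 0 < a + b := by positivity
  let C : ℝ := a + b + 1
  have hC : 1 ≤ C := by simp only [C]; linarith
  let q : ℕ → Option L → ℝ := fun n => erPairMass n a b μ ν
  let I : ∀ n, AA L m n → EdgeConf n L → ℕ := fun n α => Iv α.2 α.1.2
  let X : ∀ n, EdgeConf n L → TT L m → ℕ := fun n => cntX (fun α : AA L m n => α.1) (I n)
  let lamn : ℕ → TT L m → ℝ := fun n t => ∑ α : AA L m n, if α.1 = t then pv (q n) α.2 α.1.2 else 0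
  let lam : TT L m → ℝ := fun t => lamER a b μ ν t.2
  let K : ℝ := 4 * ∑ t : TT L m, ∑ t' : TT L m, KK C t.1.val t'.1.val
  have hX : ∀ n E t, X n E t = cycleCount n (t.1.val + 3) E t.2 := by
    intro n E t
    rw [cycleCount_eq]
    exact sum_AA m n (fun α => I n α E) t
  have hq1 : ∀ n, ∑ o, q n o = 1 := by
    intro n
    rw [Fintype.sum_option]
    simp only [q, erPairMass]
    rw [← Finset.mul_sum, ← Finset.sum_div, Finset.sum_add_distrib, ← Finset.mul_sum,
      ← Finset.mul_sum, hμ.2, hν.2, mul_one, mul_one, div_self hab.ne']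
    ring
  have hbig : ∀ᶠ n : ℕ in atTop, C ≤ (n : ℝ) :=
    tendsto_natCast_atTop_atTop.eventually_ge_atTop C
  have hprob : ∀ x, μ x ≤ 1 ∧ ν x ≤ 1 := by
    intro x
    constructor
    · rw [← hμ.2]; exact Finset.single_le_sum (fun y _ => hμ.1 y) (Finset.mem_univ x)
    · rw [← hν.2]; exact Finset.single_le_sum (fun y _ => hν.1 y) (Finset.mem_univ x)
  have hq0 : ∀ n : ℕ, C ≤ (n : ℝ) → ∀ o, 0 ≤ q n o := by
    intro n hn o
    have hn0 : (0 : ℝ) < n := by linarith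
    cases o with
    | none =>
      simp only [q, erPairMass]
      rw [sub_nonneg, div_le_one (by positivity)]
      simp only [C] at hn
      linarith
    | some x =>
      simp only [q, erPairMass]
      have := hμ.1 x
      have := hν.1 x
      positivity
  have hqδ : ∀ n : ℕ, C ≤ (n : ℝ) → ∀ x, q n (some x) ≤ C / n := by
    intro n hn x
    have hn0 : (0 : ℝ) < n := by linarith
    have e : q n (some x) = ((a * μ x + b * ν x) / 2) / n := by
      simp only [q, erPairMass]
      field_simp
    rw [e]
    apply div_le_div_of_nonneg_right _ hn0.le
    have h1 := mul_le_mul_of_nonneg_left (hprob x).1 ha.le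
    have h2 := mul_le_mul_of_nonneg_left (hprob x).2 hb.le
    simp only [C]
    linarith
  have hmain := poisson_limit (T := TT L m) (fun n => EdgeConf n L) (fun n => erMass n a b μ ν)
    X lamn lam (fun n => K / n) (tendsto_const_div_atTop_nhds_zero_nat K)
    (by
      intro t
      have := pv_sum_limit a b ha hb μ ν t.1.val t.2
      refine this.congr fun n => ?_
      exact (sum_AA m n (fun α => pv (q n) α.2 α.1.2) t).symm)
    (by
      refine Filter.Eventually.of_forall fun n => ?_
      have := Fintype.prod_sum (fun (_ : Pairs n) o => q n o)
      simp only [hq1, Finset.prod_const_one] at this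
      exact this.symm)
    (by
      filter_upwards [hbig] with n hn t
      refine Finset.sum_nonneg fun α _ => ?_
      split_ifs
      · exact pv_nonneg _ (hq0 n hn) _ _
      · exact le_rfl)
    (by
      filter_upwards [hbig] with n hn h hh t
      have hn0 : (0 : ℝ) < n := by linarith
      have hδ : 0 ≤ C / n := by positivity
      have hδ1 : C / n ≤ 1 := (div_le_one hn0).2 hn
      exact stein_app (q n) (hq1 n) (hq0 n hn) C hC hδ hδ1 (hqδ n hn) h hh t)
    (fun t => target (t.1.val + 3) t.2)
  have hlim : (∏ k ∈ Finset.Icc 3 m, ∏ ℓ : Fin k → L,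
        poissonPMF (lamER a b μ ν ℓ) (target k ℓ)) =
      ∏ t : TT L m, poissonPMF (lam t) (target (t.1.val + 3) t.2) := by
    rw [Fintype.prod_sigma]
    symm
    apply Finset.prod_nbij (fun j : Fin (m - 2) => j.val + 3)
    · intro j _
      have := j.2
      simp only [Finset.mem_Icc]
      omega
    · intro i _ j _ h
      simp only at h
      exact Fin.ext (by omega)
    · intro k hk
      simp only [Finset.coe_Icc, Set.mem_Icc] at hk
      refine ⟨⟨k - 3, by omega⟩, by simp, ?_⟩
      simp only
      omega
    · intro j _; rfl
  rw [hlim]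
  refine hmain.congr fun n => ?_
  unfold erProb
  apply Finset.sum_congr rfl
  intro E _
  have hiff : (X n E = fun t : TT L m => target (t.1.val + 3) t.2) ↔
      E ∈ {E | ∀ (k : ℕ), 3 ≤ k → k ≤ m → ∀ ℓ : Fin k → L,
          cycleCount n k E ℓ = target k ℓ} := by
    rw [Set.mem_setOf_eq]
    constructor
    · intro h k hk3 hkm l
      obtain ⟨r, rfl⟩ : ∃ r, k = r + 3 := ⟨k - 3, by omega⟩
      have := congrFun h (⟨⟨r, by omega⟩, l⟩ : TT L m)
      rw [hX] at this
      exact this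
    · intro h
      funext t
      rw [hX]
      have := t.1.2
      exact h _ (by omega) (by omega) _
  rw [Set.indicator_apply]
  by_cases hE : X n E = fun t : TT L m => target (t.1.val + 3) t.2
  · rw [if_pos hE, if_pos (hiff.1 hE), mul_one]
  · rw [if_neg hE, if_neg (fun h => hE (hiff.2 h)), mul_zero]

end LSBM
end
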